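/- arXiv:2503.12756 — 5 statements merged into one kernel-verified Lean document; each statement's English description precedes it below -/
import Mathlib

section
/- Let ℓ be a prime number, let A and B be abelian groups with A ℓ-divisible, and let φ : A → B be a surjective group homomorphism whose kernel H is finite. Then the ℓ-primary component H[ℓ^∞] of H is isomorphic, as an abelian group, to the cokernel of the induced map T_ℓφ : T_ℓA → T_ℓB on ℓ-adic Tate modules. -/
/-- The ℓ-adic Tate module of an abelian group `A`. An element is a sequence `P` with
`P n ∈ A[ℓ^(n+1)]` (so `P 0` plays the role of `P₁ ∈ A[ℓ]`) and `ℓ • P (n+1) = P n`. -/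
def TateModule (ℓ : ℕ) (A : Type*) [AddCommGroup A] : AddSubgroup (ℕ → A) where
  carrier := {P | (∀ n, ℓ ^ (n + 1) • P n = 0) ∧ ∀ n, ℓ • P (n + 1) = P n}
  zero_mem' := ⟨fun _ => smul_zero _, fun _ => smul_zero _⟩
  add_mem' := by
    rintro P Q ⟨hP1, hP2⟩ ⟨hQ1, hQ2⟩
    refine ⟨fun n => ?_, fun n => ?_⟩
    · show ℓ ^ (n + 1) • (P n + Q n) = 0
      rw [smul_add, hP1 n, hQ1 n, add_zero]
    · show ℓ • (P (n + 1) + Q (n + 1)) = P n + Q n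
      rw [smul_add, hP2 n, hQ2 n]
  neg_mem' := by
    rintro P ⟨hP1, hP2⟩
    refine ⟨fun n => ?_, fun n => ?_⟩
    · show ℓ ^ (n + 1) • (-(P n)) = 0
      rw [smul_neg, hP1 n, neg_zero]
    · show ℓ • (-(P (n + 1))) = -(P n)
      rw [smul_neg, hP2 n]

/-- The map induced on `ℓ`-adic Tate modules by a homomorphism of abelian groups,
given by applying it componentwise. -/
def tateMap (ℓ : ℕ) {A B : Type*} [AddCommGroup A] [AddCommGroup B] (φ : A →+ B) :
    TateModule ℓ A →+ TateModule ℓ B where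
  toFun P := ⟨fun n => φ (P.1 n),
    fun n => by rw [← map_nsmul, P.2.1 n, map_zero],
    fun n => by rw [← map_nsmul, P.2.2 n]⟩
  map_zero' := Subtype.ext (funext fun _ => map_zero φ)
  map_add' P Q := Subtype.ext (funext fun _ => map_add φ _ _)

/-- The `ℓ`-primary component of an abelian group: elements killed by a power of `ℓ`. -/
def primaryPart (ℓ : ℕ) (H : Type*) [AddCommGroup H] : AddSubgroup H where
  carrier := {h | ∃ k : ℕ, ℓ ^ k • h = 0}
  zero_mem' := ⟨0, smul_zero _⟩
  add_mem' := by
    rintro a b ⟨j, hj⟩ ⟨k, hk⟩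
    refine ⟨j + k, ?_⟩
    have ha : ℓ ^ (j + k) • a = 0 := by
      rw [pow_add, mul_comm, mul_smul, hj, smul_zero]
    have hb : ℓ ^ (j + k) • b = 0 := by
      rw [pow_add, mul_smul, hk, smul_zero]
    rw [smul_add, ha, hb, add_zero]
  neg_mem' := by
    rintro a ⟨k, hk⟩
    exact ⟨k, by rw [smul_neg, hk, neg_zero]⟩

/-!
Let `H = ker φ`. An `ℓ`-division tower over `h ∈ H[ℓ^∞]` is a sequence `a` in `A` with
`ℓ • a 0 = h` and `ℓ • a (n + 1) = a n`. Every `h` has one because `A` is `ℓ`-divisible,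
and the towers over `0` form `T_ℓ A`, so the towers modulo `T_ℓ A` are `H[ℓ^∞]`. Applying `φ` sends
towers to `T_ℓ B`.

Only towers over `0` land in the image of `T_ℓ A`: a tower contained in `H[ℓ^∞]`, a group killed by
some `ℓ ^ N`, lies over `0`. Conversely every `P ∈ T_ℓ B` comes from a tower: since `H / H[ℓ^∞]` is
`ℓ`-divisible, `P` has a lift `b` with `ℓ • b (n + 1) - b n ∈ H[ℓ^∞]`, and
`n ↦ ℓ ^ N • b (n + N)` is then a tower with image `P`. Hence the towers modulo `T_ℓ A` are also
the cokernel.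
-/

theorem pow_nsmul_apply_add {A : Type*} [AddMonoid A] {ℓ : ℕ} {a : ℕ → A}
    (ha : ∀ n, ℓ • a (n + 1) = a n) (n k : ℕ) : ℓ ^ k • a (n + k) = a n := by
  induction k with
  | zero => rw [pow_zero, one_nsmul, add_zero]
  | succ k ih => rw [pow_succ, mul_nsmul', ← add_assoc, ha, ih]

section PrimaryPart

variable {ℓ : ℕ} {H : Type*} [AddCommGroup H]

theorem mem_primaryPart_of_nsmul_mem {h : H} (hh : ℓ • h ∈ primaryPart ℓ H) :
    h ∈ primaryPart ℓ H := by
  obtain ⟨k, hk⟩ := hh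
  exact ⟨k + 1, by rw [pow_succ, mul_nsmul', hk]⟩

variable (ℓ H)

theorem exists_pow_nsmul_eq_zero_of_finite_primaryPart [Finite (primaryPart ℓ H)] :
    ∃ N : ℕ, ∀ h ∈ primaryPart ℓ H, ℓ ^ N • h = 0 := by
  choose k hk using fun h : primaryPart ℓ H => h.2
  obtain ⟨N, hN⟩ := (Set.finite_range k).bddAbove
  refine ⟨N, fun h hh => ?_⟩
  obtain ⟨j, rfl⟩ := Nat.exists_eq_add_of_le (hN ⟨⟨h, hh⟩, rfl⟩)
  rw [pow_add, mul_comm, mul_nsmul', hk ⟨h, hh⟩, nsmul_zero]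

theorem nsmul_quotient_primaryPart_injective :
    Function.Injective fun x : H ⧸ primaryPart ℓ H => ℓ • x := by
  refine (injective_iff_map_eq_zero (nsmulAddMonoidHom (α := H ⧸ primaryPart ℓ H) ℓ)).2 ?_
  rintro ⟨h⟩ hh
  exact (QuotientAddGroup.eq_zero_iff h).2
    (mem_primaryPart_of_nsmul_mem ((QuotientAddGroup.eq_zero_iff (ℓ • h)).1 hh))

theorem nsmul_quotient_primaryPart_surjective_of_finite [Finite (H ⧸ primaryPart ℓ H)] :
    Function.Surjective fun x : H ⧸ primaryPart ℓ H => ℓ • x :=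
  Finite.surjective_of_injective (nsmul_quotient_primaryPart_injective ℓ H)

end PrimaryPart

/-- The group of `ℓ`-division towers over a subgroup `H` of `A`: sequences `a` with
`ℓ • a (n + 1) = a n` for all `n` and `ℓ • a 0 ∈ H`. The element `ℓ • a 0` the tower lies over is
not a term of the sequence, so that the towers over `0` are exactly the elements of
`TateModule ℓ A`. -/
def divisionTower (ℓ : ℕ) {A : Type*} [AddCommGroup A] (H : AddSubgroup A) :
    AddSubgroup (ℕ → A) where
  carrier := {a | (∀ n, ℓ • a (n + 1) = a n) ∧ ℓ • a 0 ∈ H}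
  zero_mem' := ⟨fun _ => nsmul_zero ℓ, by simp [H.zero_mem]⟩
  add_mem' {a b} ha hb :=
    ⟨fun n => by rw [Pi.add_apply, nsmul_add, ha.1, hb.1, Pi.add_apply],
      by rw [Pi.add_apply, nsmul_add]; exact H.add_mem ha.2 hb.2⟩
  neg_mem' {a} ha :=
    ⟨fun n => by rw [Pi.neg_apply, neg_nsmul, ha.1, Pi.neg_apply],
      by rw [Pi.neg_apply, neg_nsmul]; exact H.neg_mem ha.2⟩

namespace divisionTower

variable {ℓ : ℕ} {A B : Type*} [AddCommGroup A] [AddCommGroup B] {H : AddSubgroup A}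

theorem pow_succ_nsmul_apply (a : divisionTower ℓ H) (n : ℕ) :
    ℓ ^ (n + 1) • a.1 n = ℓ • a.1 0 := by
  rw [pow_succ', mul_nsmul', ← pow_nsmul_apply_add a.2.1 0 n, zero_add]

variable (ℓ H) in
/-- The element of `H` over which a division tower lies. -/
def base : divisionTower ℓ H →+ H where
  toFun a := ⟨ℓ • a.1 0, a.2.2⟩
  map_zero' := Subtype.ext (nsmul_zero ℓ)
  map_add' a b := Subtype.ext (nsmul_add (a.1 0) (b.1 0) ℓ)

theorem base_surjective (hdiv : ∀ a : A, ∃ b : A, ℓ • b = a) :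
    Function.Surjective (base ℓ H) := by
  intro h
  choose d hd using hdiv
  refine ⟨⟨fun n => d^[n + 1] h, fun n => ?_, ?_⟩, Subtype.ext (hd h)⟩
  · simp only [Function.iterate_succ_apply', hd]
  · exact (hd h).symm ▸ h.2

theorem base_eq_zero_iff {a : divisionTower ℓ H} : base ℓ H a = 0 ↔ a.1 ∈ TateModule ℓ A := by
  constructor
  · intro ha
    exact ⟨fun n => (pow_succ_nsmul_apply a n).trans (congrArg Subtype.val ha), a.2.1⟩
  · intro ha
    exact Subtype.ext ((pow_succ_nsmul_apply a 0).symm.trans (ha.1 0))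

theorem tateModule_le : TateModule ℓ A ≤ divisionTower ℓ H := by
  intro t ht
  have ht_zero : ℓ • t 0 = 0 := by simpa only [zero_add, pow_one] using ht.1 0
  exact ⟨ht.2, ht_zero ▸ H.zero_mem⟩

variable {φ : A →+ B}

variable (ℓ) in
/-- The homomorphism from division towers over a subgroup of `ker φ` to the Tate module of `B`,
applying `φ` to each term. -/
def toTateModule (hH : H ≤ φ.ker) : divisionTower ℓ H →+ TateModule ℓ B where
  toFun a := ⟨fun n => φ (a.1 n),
    fun n => by rw [← map_nsmul, pow_succ_nsmul_apply]; exact hH a.2.2,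
    fun n => by rw [← map_nsmul, a.2.1]⟩
  map_zero' := Subtype.ext (funext fun _ => map_zero φ)
  map_add' _ _ := Subtype.ext (funext fun _ => map_add φ _ _)

theorem base_eq_zero_of_toTateModule_eq_zero (hH : H ≤ φ.ker) {N : ℕ}
    (hN : ∀ h ∈ H, ℓ ^ N • h = 0) (hsat : ∀ x ∈ φ.ker, ℓ • x ∈ H → x ∈ H) {a : divisionTower ℓ H}
    (ha : toTateModule ℓ hH a = 0) : base ℓ H a = 0 := by
  have ha_ker (n : ℕ) : a.1 n ∈ φ.ker := congrFun (congrArg Subtype.val ha) n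
  have ha_mem (n : ℕ) : a.1 n ∈ H := by
    induction n with
    | zero => exact hsat _ (ha_ker 0) a.2.2
    | succ n ih => exact hsat _ (ha_ker (n + 1)) ((a.2.1 n).symm ▸ ih)
  apply Subtype.ext
  calc ℓ • a.1 0 = ℓ • ℓ ^ N • a.1 (0 + N) := by rw [pow_nsmul_apply_add a.2.1]
    _ = 0 := by rw [hN _ (ha_mem _), nsmul_zero]

theorem toTateModule_mem_range_tateMap_iff (hH : H ≤ φ.ker) {N : ℕ}
    (hN : ∀ h ∈ H, ℓ ^ N • h = 0) (hsat : ∀ x ∈ φ.ker, ℓ • x ∈ H → x ∈ H) {a : divisionTower ℓ H} :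
    toTateModule ℓ hH a ∈ (tateMap ℓ φ).range ↔ base ℓ H a = 0 := by
  constructor
  · rintro ⟨t, ht⟩
    let tower : divisionTower ℓ H := ⟨t.1, tateModule_le t.2⟩
    have htower : toTateModule ℓ hH tower = toTateModule ℓ hH a := ht
    have hsub : base ℓ H (a - tower) = 0 :=
      base_eq_zero_of_toTateModule_eq_zero hH hN hsat (by rw [map_sub, htower, sub_self])
    have hbase : base ℓ H tower = 0 := base_eq_zero_iff.2 t.2
    rwa [map_sub, hbase, sub_zero] at hsub
  · intro ha
    exact ⟨⟨a.1, base_eq_zero_iff.1 ha⟩, rfl⟩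

theorem exists_lift_nsmul_sub_mem (hsurj : Function.Surjective φ)
    (hker : ∀ x ∈ φ.ker, ∃ y ∈ φ.ker, ℓ • y - x ∈ H) {x : A} {y : B} (hxy : ℓ • y = φ x) :
    ∃ b : A, φ b = y ∧ ℓ • b - x ∈ H := by
  obtain ⟨c, rfl⟩ := hsurj y
  have hc : x - ℓ • c ∈ φ.ker := by
    rw [AddMonoidHom.mem_ker, map_sub, map_nsmul, hxy, sub_self]
  obtain ⟨z, hz, hzH⟩ := hker _ hc
  refine ⟨c + z, by rw [map_add, hz, add_zero], ?_⟩
  convert hzH using 1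
  rw [nsmul_add]
  abel

theorem exists_lift_seq_nsmul_sub_mem (hsurj : Function.Surjective φ)
    (hker : ∀ x ∈ φ.ker, ∃ y ∈ φ.ker, ℓ • y - x ∈ H) (P : TateModule ℓ B) :
    ∃ b : ℕ → A, (∀ n, φ (b n) = P.1 n) ∧ ℓ • b 0 ∈ H ∧ ∀ n, ℓ • b (n + 1) - b n ∈ H := by
  obtain ⟨b₀, hb₀, hb₀H⟩ : ∃ b, φ b = P.1 0 ∧ ℓ • b - 0 ∈ H :=
    exists_lift_nsmul_sub_mem hsurj hker
      (by simpa only [zero_add, pow_one, map_zero] using P.2.1 0)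
  have hstep (n : ℕ) (x : {x : A // φ x = P.1 n}) :
      ∃ y : {y : A // φ y = P.1 (n + 1)}, ℓ • y.1 - x.1 ∈ H := by
    obtain ⟨b, hb, hbH⟩ :=
      exists_lift_nsmul_sub_mem hsurj hker ((P.2.2 n).trans x.2.symm)
    exact ⟨⟨b, hb⟩, hbH⟩
  choose next hnext using hstep
  let b (n : ℕ) : {x : A // φ x = P.1 n} := Nat.rec ⟨b₀, hb₀⟩ next n
  exact ⟨fun n => (b n).1, fun n => (b n).2, by rwa [sub_zero] at hb₀H, fun n => hnext n (b n)⟩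

theorem toTateModule_surjective (hH : H ≤ φ.ker) {N : ℕ}
    (hN : ∀ h ∈ H, ℓ ^ N • h = 0) (hsurj : Function.Surjective φ)
    (hker : ∀ x ∈ φ.ker, ∃ y ∈ φ.ker, ℓ • y - x ∈ H) :
    Function.Surjective (toTateModule ℓ hH) := by
  intro P
  obtain ⟨b, hbP, hb_zero, hb_succ⟩ := exists_lift_seq_nsmul_sub_mem hsurj hker P
  have hb_pow (n : ℕ) : ℓ ^ (n + 1) • b n ∈ H := by
    induction n with
    | zero => rwa [zero_add, pow_one]
    | succ n ih =>
      have := H.add_mem (H.nsmul_mem (hb_succ n) (ℓ ^ (n + 1))) ih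
      rwa [nsmul_sub, sub_add_cancel, ← mul_nsmul', ← pow_succ] at this
  refine ⟨⟨fun n => ℓ ^ N • b (n + N), fun n => ?_, ?_⟩, Subtype.ext (funext fun n => ?_)⟩
  · have := hN _ (hb_succ (n + N))
    rwa [nsmul_sub, sub_eq_zero, nsmul_left_comm, add_right_comm] at this
  · simpa only [zero_add, ← mul_nsmul', ← pow_succ'] using hb_pow N
  · change φ (ℓ ^ N • b (n + N)) = P.1 n
    rw [map_nsmul, hbP, pow_nsmul_apply_add P.2.2]

theorem nonempty_addEquiv_coker_tateMap (hH : H ≤ φ.ker) (hdiv : ∀ a : A, ∃ b : A, ℓ • b = a)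
    (hsurj : Function.Surjective φ) {N : ℕ} (hN : ∀ h ∈ H, ℓ ^ N • h = 0)
    (hsat : ∀ x ∈ φ.ker, ℓ • x ∈ H → x ∈ H)
    (hker : ∀ x ∈ φ.ker, ∃ y ∈ φ.ker, ℓ • y - x ∈ H) :
    Nonempty (H ≃+ TateModule ℓ B ⧸ (tateMap ℓ φ).range) := by
  let toCoker := (QuotientAddGroup.mk' (tateMap ℓ φ).range).comp (toTateModule ℓ hH)
  have toCoker_surjective : Function.Surjective toCoker :=
    (QuotientAddGroup.mk'_surjective _).comp (toTateModule_surjective hH hN hsurj hker)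
  have ker_base_eq_ker_toCoker : (base ℓ H).ker = toCoker.ker := by
    ext a
    exact (toTateModule_mem_range_tateMap_iff hH hN hsat).symm.trans
      (QuotientAddGroup.eq_zero_iff _).symm
  exact ⟨(QuotientAddGroup.quotientKerEquivOfSurjective _ (base_surjective hdiv)).symm.trans <|
    (QuotientAddGroup.quotientAddEquivOfEq ker_base_eq_ker_toCoker).trans <|
    QuotientAddGroup.quotientKerEquivOfSurjective _ toCoker_surjective⟩

end divisionTower

theorem primaryPart_ker_isomorphic_coker_tateMap_general
    {ℓ : ℕ} {A B : Type*} [AddCommGroup A] [AddCommGroup B]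
    (hdiv : ∀ a : A, ∃ b : A, ℓ • b = a)
    {φ : A →+ B} (hsurj : Function.Surjective φ)
    (hbdd : ∃ N : ℕ, ∀ h ∈ primaryPart ℓ φ.ker, ℓ ^ N • h = 0)
    (hquot : Function.Surjective fun x : φ.ker ⧸ primaryPart ℓ φ.ker => ℓ • x) :
    Nonempty (primaryPart ℓ φ.ker ≃+ TateModule ℓ B ⧸ (tateMap ℓ φ).range) := by
  obtain ⟨N, hN⟩ := hbdd
  let H : AddSubgroup A := (primaryPart ℓ φ.ker).map φ.ker.subtype
  have mem_H (x : φ.ker) : (x : A) ∈ H ↔ x ∈ primaryPart ℓ φ.ker :=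
    AddSubgroup.mem_map_iff_mem φ.ker.subtype_injective
  have hH : H ≤ φ.ker := AddSubgroup.map_subtype_le _
  have hNH : ∀ h ∈ H, ℓ ^ N • h = 0 := by
    rintro _ ⟨h, hh, rfl⟩
    rw [← map_nsmul, hN h hh, map_zero]
  have hsat : ∀ x ∈ φ.ker, ℓ • x ∈ H → x ∈ H := fun x hx hxH =>
    (mem_H ⟨x, hx⟩).2 (mem_primaryPart_of_nsmul_mem ((mem_H (ℓ • ⟨x, hx⟩)).1 hxH))
  have hker : ∀ x ∈ φ.ker, ∃ y ∈ φ.ker, ℓ • y - x ∈ H := by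
    intro x hx
    obtain ⟨y, hy⟩ := hquot (⟨x, hx⟩ : φ.ker)
    obtain ⟨y, rfl⟩ := QuotientAddGroup.mk_surjective y
    dsimp only at hy
    rw [← QuotientAddGroup.mk_nsmul, QuotientAddGroup.eq_iff_sub_mem] at hy
    exact ⟨y, y.2, (mem_H (ℓ • y - ⟨x, hx⟩)).2 hy⟩
  obtain ⟨e⟩ := divisionTower.nonempty_addEquiv_coker_tateMap hH hdiv hsurj hNH hsat hker
  exact ⟨((primaryPart ℓ φ.ker).equivMapOfInjective _ φ.ker.subtype_injective).trans e⟩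

/-- Let `ℓ` be a prime, `A`, `B` abelian groups with `A` `ℓ`-divisible, and
`φ : A → B` a surjective homomorphism with finite kernel `H`. Then the `ℓ`-primary component
`H[ℓ^∞]` of `H` is isomorphic to the cokernel of `T_ℓφ : T_ℓA → T_ℓB`. -/
theorem primaryPart_ker_isomorphic_coker_tateMap
    (ℓ : ℕ) (hℓ : ℓ.Prime) (A B : Type*) [AddCommGroup A] [AddCommGroup B]
    (hdiv : ∀ a : A, ∃ b : A, ℓ • b = a)
    (φ : A →+ B) (hsurj : Function.Surjective φ) (hker : Finite φ.ker) :
    Nonempty ((primaryPart ℓ φ.ker) ≃+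
      (TateModule ℓ B ⧸ (tateMap ℓ φ).range)) := by
  exact primaryPart_ker_isomorphic_coker_tateMap_general hdiv hsurj
    (exists_pow_nsmul_eq_zero_of_finite_primaryPart ℓ φ.ker)
    (nsmul_quotient_primaryPart_surjective_of_finite ℓ φ.ker)
end

section
/- Let ℓ be a prime and let A be an ℓ-divisible abelian group. For each finite subgroup H of A let q_H : A → A/H denote the quotient homomorphism. Then there exists a family of group isomorphisms δ_H : H[ℓ^∞] ≅ coker(T_ℓ q_H), indexed by the finite subgroups H of A, which is natural in the following sense: whenever H ≤ H' are finite subgroups of A and ψ : A/H → A/H' is the unique homomorphism with ψ ∘ q_H = q_{H'}, the composite of δ_H with the map coker(T_ℓ q_H) → coker(T_ℓ q_{H'}) induced by T_ℓψ equals the restriction of δ_{H'} to H[ℓ^∞] ⊆ H'[ℓ^∞]. -/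
/-- The inclusion `H[ℓ^∞] → H'[ℓ^∞]` induced by an inclusion `H ≤ H'` of subgroups. -/
def primaryInclusion (ℓ : ℕ) {A : Type*} [AddCommGroup A] {H H' : AddSubgroup A}
    (hle : H ≤ H') : primaryPart ℓ H →+ primaryPart ℓ H' where
  toFun x := ⟨AddSubgroup.inclusion hle x.1, by
    obtain ⟨k, hk⟩ := x.2
    exact ⟨k, by rw [← map_nsmul, hk, map_zero]⟩⟩
  map_zero' := Subtype.ext (map_zero _)
  map_add' x y := Subtype.ext (map_add _ _ _)

/-!
Let `V(X)` be the group of sequences `x` in `X` with `ℓ • x (n + 1) = x n`, so that `T_ℓ X` is the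
kernel of `x ↦ x 0` on `V(X)`, up to a shift of the index. Lift `h ∈ H[ℓ^∞]` to some `x ∈ V(A)` with
`x 0 = h`, which is possible since `A` is `ℓ`-divisible; then `x` modulo `H` starts at `0`, and
`δ_H h` is its class.

Multiplication by `ℓ` splits a finite `H` as `H[ℓ^∞] ⊕ ℓ^N H` with `ℓ` bijective on the second
summand. As `ℓ^N H` is `ℓ`-divisible, every element of `V(A/H)` lifts to `V(A)`, and a lift of an
element of `T_ℓ(A/H)` can be corrected by an element of `V(H)` so as to start in `H[ℓ^∞]`: this is
surjectivity. As an element of `V(H)` starts in `ℓ^N H`, it can start in `H[ℓ^∞]` only at `0`: this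
is injectivity. Naturality holds because the same `x` computes `δ_H h` and `δ_{H'} h`.
-/

section KernelEquiv

variable {G B C : Type*} [AddGroup G] [AddGroup B] [AddGroup C]

/-- The isomorphism between the targets of two surjective homomorphisms with the same kernel. -/
noncomputable def equivOfKerEq (f : G →+ B) (g : G →+ C) (hf : Function.Surjective f)
    (hg : Function.Surjective g) (hker : f.ker = g.ker) : B ≃+ C :=
  ((QuotientAddGroup.quotientKerEquivOfSurjective f hf).symm.trans
    (QuotientAddGroup.quotientAddEquivOfEq hker)).trans
    (QuotientAddGroup.quotientKerEquivOfSurjective g hg)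

theorem equivOfKerEq_apply (f : G →+ B) (g : G →+ C) (hf : Function.Surjective f)
    (hg : Function.Surjective g) (hker : f.ker = g.ker) (x : G) :
    equivOfKerEq f g hf hg hker (f x) = g x := by
  have symm_apply : (QuotientAddGroup.quotientKerEquivOfSurjective f hf).symm (f x) = x :=
    (AddEquiv.symm_apply_eq _).2 rfl
  rw [equivOfKerEq, AddEquiv.trans_apply, AddEquiv.trans_apply, symm_apply]
  rfl

end KernelEquiv

section DivisionSequences

variable {ℓ : ℕ} {A : Type*} [AddCommGroup A]

/-- The group `V(A)` of sequences in `A` along which each term is `ℓ` times the next. Unlike in the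
Tate module, the initial term is arbitrary. -/
def divisionSequences (ℓ : ℕ) (A : Type*) [AddCommGroup A] : AddSubgroup (ℕ → A) where
  carrier := {x | ∀ n, ℓ • x (n + 1) = x n}
  zero_mem' _ := smul_zero _
  add_mem' {x y} hx hy n := by rw [Pi.add_apply, smul_add, hx n, hy n, Pi.add_apply]
  neg_mem' {x} hx n := by rw [Pi.neg_apply, smul_neg, hx n, Pi.neg_apply]

theorem mem_tateModule_iff {P : ℕ → A} :
    P ∈ TateModule ℓ A ↔ P ∈ divisionSequences ℓ A ∧ ℓ • P 0 = 0 := by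
  refine ⟨fun hP => ⟨hP.2, by simpa using hP.1 0⟩, fun ⟨hP, hP₀⟩ => ⟨fun n => ?_, hP⟩⟩
  induction n with
  | zero => simpa using hP₀
  | succ n ih => rw [pow_succ, mul_smul, hP n, ih]

theorem pow_nsmul_divisionSequences_apply {x : ℕ → A} (hx : x ∈ divisionSequences ℓ A) (n k : ℕ) :
    ℓ ^ k • x (n + k) = x n := by
  induction k with
  | zero => simp
  | succ k ih => rw [pow_succ, mul_smul, ← add_assoc, hx, ih]

/-- This is the vanishing of `lim¹` for the tower of multiplications by `ℓ` on `A`. -/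
theorem exists_nsmul_succ_eq_add (hdiv : ∀ a : A, ∃ b, ℓ • b = a) (ε : ℕ → A) (a : A) :
    ∃ x : ℕ → A, x 0 = a ∧ ∀ n, ℓ • x (n + 1) = x n + ε n := by
  choose root nsmul_root using hdiv
  exact ⟨fun n => Nat.rec a (fun n y => root (y + ε n)) n, rfl, fun _ => nsmul_root _⟩

theorem exists_divisionSequences_apply_zero_eq (hdiv : ∀ a : A, ∃ b, ℓ • b = a) (a : A) :
    ∃ x ∈ divisionSequences ℓ A, x 0 = a := by
  obtain ⟨x, hx₀, hx⟩ := exists_nsmul_succ_eq_add hdiv 0 a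
  exact ⟨x, fun n => by simpa using hx n, hx₀⟩

end DivisionSequences

section FittingIndex

variable {ℓ N : ℕ} {H : Type*} [AddCommGroup H]

/-- The kernels and the images of the powers of multiplication by `ℓ` on `H` are stationary from
the exponent `N` on. By Fitting's lemma `H` is then the direct sum of `H[ℓ^∞] = H[ℓ^N]` and `ℓ^N H`,
and `ℓ` is bijective on `ℓ^N H`. -/
structure HasFittingIndex (ℓ N : ℕ) (H : Type*) [AddCommGroup H] : Prop where
  pow_nsmul_eq_zero : ∀ h : H, ℓ ^ (N + 1) • h = 0 → ℓ ^ N • h = 0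
  exists_pow_succ_nsmul_eq : ∀ h : H, ∃ k : H, ℓ ^ (N + 1) • k = ℓ ^ N • h

theorem exists_hasFittingIndex_of_exponentExists (ℓ : ℕ) (hH : AddMonoid.ExponentExists H) :
    ∃ N, HasFittingIndex ℓ N H := by
  obtain ⟨i, j, hij, hmod⟩ := Set.Finite.exists_lt_map_eq_of_forall_mem
    (f := fun k => ℓ ^ k % AddMonoid.exponent H)
    (fun _ => Nat.mod_lt _ (AddMonoid.exponent_pos.2 hH)) (Set.finite_Iio _)
  obtain ⟨d, rfl⟩ := Nat.exists_eq_add_of_lt hij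
  have periodic (h : H) : ℓ ^ (i + d + 1) • h = ℓ ^ i • h := by
    rw [AddMonoid.nsmul_eq_mod_exponent, ← hmod, ← AddMonoid.nsmul_eq_mod_exponent]
  refine ⟨i, fun h hh => ?_, fun h => ⟨ℓ ^ d • h, ?_⟩⟩
  · rw [← periodic h, add_right_comm, pow_add, mul_comm, mul_smul, hh, smul_zero]
  · rw [← mul_smul, ← pow_add, add_right_comm, periodic h]

theorem HasFittingIndex.pow_nsmul_eq_zero_of_mem_primaryPart (hH : HasFittingIndex ℓ N H) {h : H}
    (hh : h ∈ primaryPart ℓ H) : ℓ ^ N • h = 0 := by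
  obtain ⟨k, hk⟩ := hh
  induction k generalizing h with
  | zero => rw [show h = 0 by simpa using hk, smul_zero]
  | succ k ih =>
    refine hH.pow_nsmul_eq_zero h ?_
    rw [pow_succ, mul_smul]
    exact ih (by rw [← mul_smul, ← pow_succ, hk])

theorem HasFittingIndex.divisionSequences_apply_zero_eq_zero (hH : HasFittingIndex ℓ N H)
    {u : ℕ → H} (hu : u ∈ divisionSequences ℓ H) (hu₀ : u 0 ∈ primaryPart ℓ H) : u 0 = 0 := by
  have pow_nsmul_apply : ℓ ^ N • u N = u 0 := by
    simpa using pow_nsmul_divisionSequences_apply hu 0 N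
  have apply_mem : u N ∈ primaryPart ℓ H := by
    obtain ⟨k, hk⟩ := hu₀
    exact ⟨k + N, by rw [pow_add, mul_smul, pow_nsmul_apply, hk]⟩
  rw [← pow_nsmul_apply, hH.pow_nsmul_eq_zero_of_mem_primaryPart apply_mem]

theorem exists_nsmul_eq_of_mem_range_pow_nsmul
    (hrange : ∀ h : H, ∃ k : H, ℓ ^ (N + 1) • k = ℓ ^ N • h)
    (d : (nsmulAddMonoidHom (α := H) (ℓ ^ N)).range) :
    ∃ e : (nsmulAddMonoidHom (α := H) (ℓ ^ N)).range, ℓ • e = d := by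
  obtain ⟨_, h, rfl⟩ := d
  obtain ⟨k, hk⟩ := hrange h
  refine ⟨⟨ℓ ^ N • k, k, rfl⟩, Subtype.ext ?_⟩
  change ℓ • ℓ ^ N • k = ℓ ^ N • h
  rw [← mul_smul, ← pow_succ', hk]

theorem exists_divisionSequences_sub_mem_primaryPart
    (hrange : ∀ h : H, ∃ k : H, ℓ ^ (N + 1) • k = ℓ ^ N • h) (h : H) :
    ∃ v ∈ divisionSequences ℓ H, h - v 0 ∈ primaryPart ℓ H := by
  obtain ⟨w, hw, hw₀⟩ := exists_divisionSequences_apply_zero_eq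
    (exists_nsmul_eq_of_mem_range_pow_nsmul hrange) ⟨ℓ ^ N • h, h, rfl⟩
  have pow_nsmul_apply : ℓ ^ N • (w N : H) = ℓ ^ N • h := by
    have := pow_nsmul_divisionSequences_apply hw 0 N
    rw [zero_add, hw₀] at this
    exact congrArg Subtype.val this
  refine ⟨fun n => w (N + n), fun n => congrArg Subtype.val (hw (N + n)), N, ?_⟩
  change ℓ ^ N • (h - w N) = 0
  rw [smul_sub, pow_nsmul_apply, sub_self]

end FittingIndex

section Connecting

variable {ℓ N : ℕ} {A : Type*} [AddCommGroup A] {H H' : AddSubgroup A}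

theorem exists_divisionSequences_mk_eq
    (hrange : ∀ h : H, ∃ k : H, ℓ ^ (N + 1) • k = ℓ ^ N • h) {Q : ℕ → A ⧸ H}
    (hQ : Q ∈ divisionSequences ℓ (A ⧸ H)) :
    ∃ x ∈ divisionSequences ℓ A, ∀ n, (x n : A ⧸ H) = Q n := by
  choose a mk_a using fun n => QuotientAddGroup.mk_surjective (Q n)
  -- Replacing `a n` by `ℓ ^ N • a (n + N)` puts the defect from being a division sequence in
  -- `ℓ ^ N H`, where it can be solved away.
  let b n := ℓ ^ N • a (n + N)
  have mk_b (n : ℕ) : (b n : A ⧸ H) = Q n := by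
    rw [QuotientAddGroup.mk_nsmul, mk_a, pow_nsmul_divisionSequences_apply hQ]
  have defect_mem (n : ℕ) : ℓ • a (n + N + 1) - a (n + N) ∈ H := by
    rw [← QuotientAddGroup.eq_zero_iff, QuotientAddGroup.mk_sub, QuotientAddGroup.mk_nsmul, mk_a,
      mk_a, hQ, sub_self]
  let ε (n : ℕ) : (nsmulAddMonoidHom (α := H) (ℓ ^ N)).range := ⟨_, ⟨_, defect_mem n⟩, rfl⟩
  have nsmul_b (n : ℕ) : ℓ • b (n + 1) = b n + (ε n : H) := by
    change ℓ • ℓ ^ N • a (n + 1 + N) =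
      ℓ ^ N • a (n + N) + ℓ ^ N • (ℓ • a (n + N + 1) - a (n + N))
    rw [smul_sub, smul_comm, add_right_comm n 1 N, add_sub_cancel]
  obtain ⟨d, -, nsmul_d⟩ := exists_nsmul_succ_eq_add
    (exists_nsmul_eq_of_mem_range_pow_nsmul hrange) ε 0
  refine ⟨fun n => b n - (d n : H), fun n => ?_, fun n => ?_⟩
  · have nsmul_d' : ℓ • ((d (n + 1) : H) : A) = (d n : H) + (ε n : H) :=
      congrArg (H.subtype.comp (AddSubgroup.subtype _)) (nsmul_d n)
    rw [smul_sub, nsmul_b, nsmul_d', add_sub_add_right_eq_sub]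
  · rw [QuotientAddGroup.mk_sub, mk_b, (QuotientAddGroup.eq_zero_iff _).2 (d n : H).2, sub_zero]

/-- The fibre product of `V(A)` and `H[ℓ^∞]` over `A`: division sequences in `A` whose initial term
is an `ℓ`-primary element of `H`, paired with that element. -/
def primaryDivisionSequences (ℓ : ℕ) (H : AddSubgroup A) :
    AddSubgroup (divisionSequences ℓ A × primaryPart ℓ H) :=
  AddMonoidHom.eqLocus
    (((Pi.evalAddMonoidHom _ 0).comp (divisionSequences ℓ A).subtype).comp (AddMonoidHom.fst _ _))
    ((H.subtype.comp (primaryPart ℓ H).subtype).comp (AddMonoidHom.snd _ _))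

namespace primaryDivisionSequences

/-- The initial term, as an element of `H[ℓ^∞]`. -/
def initial (ℓ : ℕ) (H : AddSubgroup A) : primaryDivisionSequences ℓ H →+ primaryPart ℓ H :=
  (AddMonoidHom.snd _ _).comp (primaryDivisionSequences ℓ H).subtype

/-- Reduction modulo `H`. The initial term reduces to zero and is dropped, since the Tate module is
indexed from the `ℓ`-torsion on. -/
def reduction (ℓ : ℕ) (H : AddSubgroup A) :
    primaryDivisionSequences ℓ H →+ TateModule ℓ (A ⧸ H) where
  toFun x := ⟨fun n => QuotientAddGroup.mk' H (x.1.1.1 (n + 1)), mem_tateModule_iff.2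
    ⟨fun n => by rw [← map_nsmul, x.1.1.2], by
      rw [← map_nsmul, x.1.1.2, show x.1.1.1 0 = x.1.2.1 from x.2]
      exact (QuotientAddGroup.eq_zero_iff _).2 x.1.2.1.2⟩⟩
  map_zero' := rfl
  map_add' _ _ := rfl

theorem initial_surjective (hdiv : ∀ a : A, ∃ b, ℓ • b = a) :
    Function.Surjective (initial ℓ H) := fun h =>
  let ⟨x, hx, hx₀⟩ := exists_divisionSequences_apply_zero_eq hdiv (h : A)
  ⟨⟨(⟨x, hx⟩, h), hx₀⟩, rfl⟩

theorem reduction_surjective (hrange : ∀ h : H, ∃ k : H, ℓ ^ (N + 1) • k = ℓ ^ N • h) :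
    Function.Surjective (reduction ℓ H) := by
  intro P
  obtain ⟨hP, hP₀⟩ := mem_tateModule_iff.1 P.2
  obtain ⟨x, hx, mk_x⟩ := exists_divisionSequences_mk_eq hrange hP
  -- `ℓ • x` is `x` with the term `ℓ • x 0 ∈ H` put in front.
  have nsmul_apply_zero_mem : ℓ • x 0 ∈ H := by
    rw [← QuotientAddGroup.eq_zero_iff, QuotientAddGroup.mk_nsmul, mk_x, hP₀]
  obtain ⟨v, hv, hv₀⟩ :=
    exists_divisionSequences_sub_mem_primaryPart hrange ⟨ℓ • x 0, nsmul_apply_zero_mem⟩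
  have coe_v_mem : (fun n => (v n : A)) ∈ divisionSequences ℓ A :=
    fun n => congrArg Subtype.val (hv n)
  refine ⟨⟨(⟨_, sub_mem (nsmul_mem hx ℓ) coe_v_mem⟩, ⟨_, hv₀⟩), rfl⟩,
    Subtype.ext (funext fun n => ?_)⟩
  change ((ℓ • x (n + 1) - v (n + 1) : A) : A ⧸ H) = P.1 n
  rw [hx, QuotientAddGroup.mk_sub, mk_x, (QuotientAddGroup.eq_zero_iff _).2 (v (n + 1)).2, sub_zero]

theorem reduction_mem_range_of_initial_eq_zero {x : primaryDivisionSequences ℓ H}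
    (hx : initial ℓ H x = 0) :
    reduction ℓ H x ∈ (tateMap ℓ (QuotientAddGroup.mk' H)).range := by
  obtain ⟨⟨⟨x, hxV⟩, h⟩, hx₀⟩ := x
  obtain rfl : h = 0 := hx
  exact ⟨⟨fun n => x (n + 1), mem_tateModule_iff.2 ⟨fun n => hxV (n + 1), (hxV 0).trans hx₀⟩⟩, rfl⟩

theorem initial_eq_zero_of_reduction_mem_range (hH : HasFittingIndex ℓ N H)
    {x : primaryDivisionSequences ℓ H}
    (hx : reduction ℓ H x ∈ (tateMap ℓ (QuotientAddGroup.mk' H)).range) :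
    initial ℓ H x = 0 := by
  obtain ⟨⟨⟨x, hxV⟩, h⟩, hx₀⟩ := x
  obtain ⟨t, ht⟩ := hx
  obtain ⟨htV, ht₀⟩ := mem_tateModule_iff.1 t.2
  have mk_t (n : ℕ) : (t.1 n : A ⧸ H) = x (n + 1) := congrFun (congrArg Subtype.val ht) n
  have sub_mem_H (n : ℕ) : x n - ℓ • t.1 n ∈ H := by
    rw [← QuotientAddGroup.eq_zero_iff, QuotientAddGroup.mk_sub, QuotientAddGroup.mk_nsmul, mk_t,
      ← QuotientAddGroup.mk_nsmul, hxV, sub_self]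
  let u (n : ℕ) : H := ⟨x n - ℓ • t.1 n, sub_mem_H n⟩
  have hu : u ∈ divisionSequences ℓ H :=
    fun n => Subtype.ext (sub_mem hxV (nsmul_mem htV ℓ) n)
  have hu₀ : u 0 = h := Subtype.ext (by
    change x 0 - ℓ • t.1 0 = h
    rw [ht₀, sub_zero]
    exact hx₀)
  exact Subtype.ext (hu₀ ▸ hH.divisionSequences_apply_zero_eq_zero hu (hu₀ ▸ h.2))

theorem ker_initial_eq_ker_mk_reduction (hH : HasFittingIndex ℓ N H) :
    (initial ℓ H).ker = ((QuotientAddGroup.mk'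
      (tateMap ℓ (QuotientAddGroup.mk' H)).range).comp (reduction ℓ H)).ker := by
  ext x
  rw [AddMonoidHom.mem_ker, ← AddMonoidHom.comap_ker, QuotientAddGroup.ker_mk',
    AddSubgroup.mem_comap]
  exact ⟨reduction_mem_range_of_initial_eq_zero, initial_eq_zero_of_reduction_mem_range hH⟩

end primaryDivisionSequences

open primaryDivisionSequences

/-- The isomorphism `δ_H : H[ℓ^∞] ≃ coker (T_ℓ q_H)`, sending the initial term of a division
sequence in `A` to the class of the reduction of that sequence modulo `H`. -/
noncomputable def primaryPartEquivTateCoker (hdiv : ∀ a : A, ∃ b, ℓ • b = a)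
    (hH : HasFittingIndex ℓ N H) :
    primaryPart ℓ H ≃+ TateModule ℓ (A ⧸ H) ⧸ (tateMap ℓ (QuotientAddGroup.mk' H)).range :=
  equivOfKerEq (initial ℓ H) ((QuotientAddGroup.mk' _).comp (reduction ℓ H))
    (initial_surjective hdiv)
    ((QuotientAddGroup.mk'_surjective _).comp (reduction_surjective hH.exists_pow_succ_nsmul_eq))
    (ker_initial_eq_ker_mk_reduction hH)

theorem primaryPartEquivTateCoker_initial (hdiv : ∀ a : A, ∃ b, ℓ • b = a)
    (hH : HasFittingIndex ℓ N H) (x : primaryDivisionSequences ℓ H) :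
    primaryPartEquivTateCoker hdiv hH (initial ℓ H x) = QuotientAddGroup.mk (reduction ℓ H x) :=
  equivOfKerEq_apply ..

theorem map_primaryPartEquivTateCoker {N' : ℕ} (hdiv : ∀ a : A, ∃ b, ℓ • b = a)
    (hH : HasFittingIndex ℓ N H) (hH' : HasFittingIndex ℓ N' H') (hle : H ≤ H')
    (ψ : A ⧸ H →+ A ⧸ H') (hψ : ψ.comp (QuotientAddGroup.mk' H) = QuotientAddGroup.mk' H')
    (hcompat : (tateMap ℓ (QuotientAddGroup.mk' H)).range ≤
      ((tateMap ℓ (QuotientAddGroup.mk' H')).range).comap (tateMap ℓ ψ))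
    (h : primaryPart ℓ H) :
    QuotientAddGroup.map _ _ (tateMap ℓ ψ) hcompat (primaryPartEquivTateCoker hdiv hH h) =
      primaryPartEquivTateCoker hdiv hH' (primaryInclusion ℓ hle h) := by
  obtain ⟨x, rfl⟩ := initial_surjective hdiv h
  let x' : primaryDivisionSequences ℓ H' := ⟨(x.1.1, primaryInclusion ℓ hle x.1.2), x.2⟩
  have reduction_x' : tateMap ℓ ψ (reduction ℓ H x) = reduction ℓ H' x' :=
    Subtype.ext (funext fun n => DFunLike.congr_fun hψ (x.1.1.1 (n + 1)))
  calc QuotientAddGroup.map _ _ (tateMap ℓ ψ) hcompat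
        (primaryPartEquivTateCoker hdiv hH (initial ℓ H x))
      = QuotientAddGroup.mk (tateMap ℓ ψ (reduction ℓ H x)) := by
        rw [primaryPartEquivTateCoker_initial, QuotientAddGroup.map_mk]
    _ = primaryPartEquivTateCoker hdiv hH' (initial ℓ H' x') := by
        rw [reduction_x', primaryPartEquivTateCoker_initial]

end Connecting

theorem tate_coker_isomorphism_natural_general
    (ℓ : ℕ) (A : Type*) [AddCommGroup A]
    (hdiv : ∀ a : A, ∃ b : A, ℓ • b = a) :
    ∃ δ : ∀ H : AddSubgroup A, (∃ N, HasFittingIndex ℓ N H) →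
      (primaryPart ℓ H ≃+
        (TateModule ℓ (A ⧸ H) ⧸ (tateMap ℓ (QuotientAddGroup.mk' H)).range)),
      ∀ (H H' : AddSubgroup A) (hH : ∃ N, HasFittingIndex ℓ N H)
        (hH' : ∃ N, HasFittingIndex ℓ N H') (hle : H ≤ H')
        (ψ : A ⧸ H →+ A ⧸ H'), ψ.comp (QuotientAddGroup.mk' H) = QuotientAddGroup.mk' H' →
        ∀ (hcompat : (tateMap ℓ (QuotientAddGroup.mk' H)).range ≤
          ((tateMap ℓ (QuotientAddGroup.mk' H')).range).comap (tateMap ℓ ψ))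
        (h : primaryPart ℓ H),
        QuotientAddGroup.map _ _ (tateMap ℓ ψ) hcompat (δ H hH h) =
          δ H' hH' (primaryInclusion ℓ hle h) :=
  ⟨fun _ hH => primaryPartEquivTateCoker hdiv hH.choose_spec, fun _ _ hH hH' =>
    map_primaryPartEquivTateCoker hdiv hH.choose_spec hH'.choose_spec⟩

/-- For an `ℓ`-divisible abelian group `A` there is a family of isomorphisms
`δ_H : H[ℓ^∞] ≃ coker (T_ℓ q_H)`, indexed by the finite subgroups `H ≤ A` (with
`q_H : A → A/H` the quotient map), natural with respect to enlarging the kernel: for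
`H ≤ H'` and `ψ : A/H → A/H'` the unique homomorphism with `ψ ∘ q_H = q_{H'}`, the
composite of `δ_H` with the map on cokernels induced by `T_ℓψ` is the restriction of
`δ_{H'}` to `H[ℓ^∞] ⊆ H'[ℓ^∞]`. -/
theorem tate_coker_isomorphism_natural
    (ℓ : ℕ) (hℓ : ℓ.Prime) (A : Type*) [AddCommGroup A]
    (hdiv : ∀ a : A, ∃ b : A, ℓ • b = a) :
    ∃ δ : ∀ H : AddSubgroup A, Finite H →
      (primaryPart ℓ H ≃+
        (TateModule ℓ (A ⧸ H) ⧸ (tateMap ℓ (QuotientAddGroup.mk' H)).range)),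
      ∀ (H H' : AddSubgroup A) (hH : Finite H) (hH' : Finite H') (hle : H ≤ H')
        (ψ : A ⧸ H →+ A ⧸ H')
        (hψ : ψ.comp (QuotientAddGroup.mk' H) = QuotientAddGroup.mk' H')
        (hcompat : (tateMap ℓ (QuotientAddGroup.mk' H)).range ≤
          ((tateMap ℓ (QuotientAddGroup.mk' H')).range).comap (tateMap ℓ ψ))
        (h : primaryPart ℓ H),
        QuotientAddGroup.map _ _ (tateMap ℓ ψ) hcompat (δ H hH h) =
          δ H' hH' (primaryInclusion ℓ hle h) :=
  let ⟨δ, hδ⟩ := tate_coker_isomorphism_natural_general ℓ A hdiv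
  ⟨fun H _ => δ H (exists_hasFittingIndex_of_exponentExists ℓ .of_finite),
    fun H H' _ _ => hδ H H' _ _⟩
end

section
/- Let ℓ be a prime, let A and B be abelian groups with A ℓ-divisible, and let φ : A → B be a surjective group homomorphism with finite kernel. Then the induced Q-linear map V_ℓφ : T_ℓA ⊗_Z Q → T_ℓB ⊗_Z Q, obtained from T_ℓφ by tensoring with Q, is an isomorphism. -/
/-! If `m` kills `ker φ` and `n` kills `coker φ`, then `n • b = φ a` determines `m • a`, and
`b ↦ m • a` is a homomorphism `ψ : B → A` with `ψ ∘ φ = m * n` and `φ ∘ ψ = m * n` (for an isogeny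
`φ` this is the dual isogeny). Applying `T_ℓ` to these identities shows that `T_ℓψ` inverts `T_ℓφ`
up to the factor `m * n`, which becomes invertible after tensoring with `ℚ`. -/

section Tensor

open TensorProduct

variable {R M M' Q : Type*} [CommSemiring R] [AddCommMonoid M] [AddCommMonoid M']
  [AddCommMonoid Q] [Module R M] [Module R M'] [Module R Q] {r : R}

variable (M) in
theorem isUnit_algebraMap_end_tensorProduct
    (hr : IsUnit (algebraMap R (Module.End R Q) r)) :
    IsUnit (algebraMap R (Module.End R (M ⊗[R] Q)) r) := by
  simpa only [AlgHom.commutes] using hr.map (Module.End.lTensorAlgHom R Q M)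

theorem rTensor_comp_rTensor_of_comp_eq_smul_id {f : M →ₗ[R] M'} {g : M' →ₗ[R] M}
    (hgf : g ∘ₗ f = r • LinearMap.id) :
    g.rTensor Q ∘ₗ f.rTensor Q = algebraMap R (Module.End R (M ⊗[R] Q)) r := by
  rw [← LinearMap.rTensor_comp, hgf, LinearMap.rTensor_smul, LinearMap.rTensor_id]
  rfl

theorem rTensor_bijective_of_comp_eq_smul_id
    (hr : IsUnit (algebraMap R (Module.End R Q) r)) {f : M →ₗ[R] M'} {g : M' →ₗ[R] M}
    (hgf : g ∘ₗ f = r • LinearMap.id) (hfg : f ∘ₗ g = r • LinearMap.id) :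
    Function.Bijective (f.rTensor Q) := by
  have bijective_gf : Function.Bijective (g.rTensor Q ∘ₗ f.rTensor Q) := by
    rw [rTensor_comp_rTensor_of_comp_eq_smul_id hgf]
    exact (Module.End.isUnit_iff _).mp (isUnit_algebraMap_end_tensorProduct M hr)
  have bijective_fg : Function.Bijective (f.rTensor Q ∘ₗ g.rTensor Q) := by
    rw [rTensor_comp_rTensor_of_comp_eq_smul_id hfg]
    exact (Module.End.isUnit_iff _).mp (isUnit_algebraMap_end_tensorProduct M' hr)
  rw [LinearMap.coe_comp] at bijective_gf bijective_fg
  exact ⟨bijective_gf.injective.of_comp, bijective_fg.surjective.of_comp⟩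

theorem isUnit_algebraMap_end_of_isUnit {S : Type*} [Semiring S] [Algebra R S]
    (hr : IsUnit (algebraMap R S r)) : IsUnit (algebraMap R (Module.End R S) r) := by
  simpa only [AlgHom.commutes] using hr.map (Algebra.lmul R S)

end Tensor

section TateMap

variable {A B C : Type*} [AddCommGroup A] [AddCommGroup B] [AddCommGroup C]

theorem tateMap_id (ℓ : ℕ) : tateMap ℓ (AddMonoidHom.id A) = AddMonoidHom.id _ := rfl

theorem tateMap_comp (ℓ : ℕ) (ψ : B →+ C) (φ : A →+ B) :
    tateMap ℓ (ψ.comp φ) = (tateMap ℓ ψ).comp (tateMap ℓ φ) := rfl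

theorem tateMap_nsmul (ℓ n : ℕ) (φ : A →+ B) : tateMap ℓ (n • φ) = n • tateMap ℓ φ := rfl

theorem tateMap_comp_tateMap_of_comp_eq_nsmul_id (ℓ : ℕ) {n : ℕ} {φ : A →+ B} {ψ : B →+ A}
    (h : ψ.comp φ = n • AddMonoidHom.id A) :
    (tateMap ℓ ψ).toIntLinearMap ∘ₗ (tateMap ℓ φ).toIntLinearMap = (n : ℤ) • LinearMap.id := by
  have comp_eq : (tateMap ℓ ψ).comp (tateMap ℓ φ) = n • AddMonoidHom.id _ := by
    rw [← tateMap_comp, h, tateMap_nsmul, tateMap_id]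
  ext1 P
  simpa using DFunLike.congr_fun comp_eq P

end TateMap

section InverseUpToMultiplication

variable {A B : Type*} [AddCommGroup A] [AddCommGroup B] {φ : A →+ B}

theorem exists_comp_eq_nsmul_id_of_surjective (hφ : Function.Surjective φ) {m : ℕ}
    (hm : ∀ a ∈ φ.ker, m • a = 0) :
    ∃ ψ : B →+ A, ψ.comp φ = m • AddMonoidHom.id A :=
  ⟨φ.liftOfSurjective hφ ⟨m • AddMonoidHom.id A, hm⟩, φ.liftOfRightInverse_comp _ _ _⟩

theorem exists_comp_eq_mul_nsmul_id_of_nsmul_mem_range {m n : ℕ} (hm : ∀ a ∈ φ.ker, m • a = 0)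
    (hn : ∀ b, n • b ∈ φ.range) :
    ∃ ψ : B →+ A, ψ.comp φ = (m * n) • AddMonoidHom.id A ∧
      φ.comp ψ = (m * n) • AddMonoidHom.id B := by
  obtain ⟨χ, hχ⟩ : ∃ χ : φ.range →+ A, χ.comp φ.rangeRestrict = m • AddMonoidHom.id A :=
    exists_comp_eq_nsmul_id_of_surjective φ.rangeRestrict_surjective (by rwa [φ.ker_rangeRestrict])
  have χ_apply (a : A) : χ (φ.rangeRestrict a) = m • a := DFunLike.congr_fun hχ a
  let nsmulToRange : B →+ φ.range := (n • AddMonoidHom.id B).codRestrict φ.range hn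
  refine ⟨χ.comp nsmulToRange, ?_, ?_⟩
  · ext a
    calc χ (nsmulToRange (φ a)) = χ (φ.rangeRestrict (n • a)) :=
          congrArg χ (Subtype.ext (map_nsmul φ n a).symm)
      _ = (m * n) • a := by rw [χ_apply, mul_smul]
  · ext b
    obtain ⟨a, ha⟩ := φ.rangeRestrict_surjective (nsmulToRange b)
    calc φ (χ (nsmulToRange b)) = m • φ a := by rw [← ha, χ_apply, map_nsmul]
      _ = m • n • b := congrArg (m • ·) (congrArg Subtype.val ha)
      _ = (m * n) • b := (mul_smul m n b).symm

theorem exists_comp_eq_nsmul_id_of_exponentExists (hker : AddMonoid.ExponentExists φ.ker)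
    (hcoker : AddMonoid.ExponentExists (B ⧸ φ.range)) :
    ∃ N : ℕ, N ≠ 0 ∧ ∃ ψ : B →+ A, ψ.comp φ = N • AddMonoidHom.id A ∧
      φ.comp ψ = N • AddMonoidHom.id B := by
  obtain ⟨m, hm_pos, hm⟩ := hker
  obtain ⟨n, hn_pos, hn⟩ := hcoker
  refine ⟨m * n, (Nat.mul_pos hm_pos hn_pos).ne',
    exists_comp_eq_mul_nsmul_id_of_nsmul_mem_range (fun a ha => ?_) (fun b => ?_)⟩
  · exact congrArg Subtype.val (hm ⟨a, ha⟩)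
  · exact (QuotientAddGroup.eq_zero_iff _).mp (hn b)

end InverseUpToMultiplication

theorem rationalTateMap_bijective_general (ℓ : ℕ) {A B : Type*} [AddCommGroup A] [AddCommGroup B]
    (φ : A →+ B) (hker : AddMonoid.ExponentExists φ.ker)
    (hcoker : AddMonoid.ExponentExists (B ⧸ φ.range)) :
    Function.Bijective
      (LinearMap.rTensor (R := ℤ) ℚ (tateMap ℓ φ).toIntLinearMap) := by
  obtain ⟨N, hN, ψ, hψφ, hφψ⟩ := exists_comp_eq_nsmul_id_of_exponentExists hker hcoker
  have isUnit_N : IsUnit (algebraMap ℤ ℚ N) := by simpa using hN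
  exact rTensor_bijective_of_comp_eq_smul_id (isUnit_algebraMap_end_of_isUnit isUnit_N)
    (tateMap_comp_tateMap_of_comp_eq_nsmul_id ℓ hψφ)
    (tateMap_comp_tateMap_of_comp_eq_nsmul_id ℓ hφψ)

/-- Let `ℓ` be a prime, `A`, `B` abelian groups with `A` `ℓ`-divisible, and
`φ : A → B` a surjective homomorphism with finite kernel. Then the induced map
`V_ℓφ : T_ℓA ⊗_ℤ ℚ → T_ℓB ⊗_ℤ ℚ` is an isomorphism. -/
theorem rationalTateMap_bijective (ℓ : ℕ) (hℓ : ℓ.Prime)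
    (A B : Type*) [AddCommGroup A] [AddCommGroup B]
    (hdiv : ∀ a : A, ∃ b : A, ℓ • b = a)
    (φ : A →+ B) (hsurj : Function.Surjective φ) (hker : Finite φ.ker) :
    Function.Bijective
      (LinearMap.rTensor (R := ℤ) ℚ (tateMap ℓ φ).toIntLinearMap) := by
  have : Subsingleton (B ⧸ φ.range) :=
    φ.range_eq_top.mpr hsurj ▸ QuotientAddGroup.subsingleton_quotient_top
  exact rationalTateMap_bijective_general ℓ φ .of_finite .of_finite
end

section
/- Let ℓ be a prime, let d ∈ Z_ℓ^×, and let b_1, b_2, w_1, w_2, x_1, x_2, y_1, y_2, z_1, z_2 ∈ Z_ℓ. Let X ∈ M_4(Q_ℓ) be the block-diagonal matrix with 2×2 diagonal blocks A_i having rows (1 + x_iℓ, b_i + y_iℓ) and (w_iℓ, d + z_iℓ) for i = 1, 2, and let M_q ∈ M_4(Q_ℓ) be the matrix with rows (1, 0, 1/ℓ, 0), (0, 1, 0, 0), (0, 0, 1/ℓ, 0), (0, 0, 0, 1). Then M_q is invertible and M_q^{-1}·X·M_q equals the matrix with rows (1+x_1ℓ, b_1+y_1ℓ, x_1−x_2,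 −b_2−y_2ℓ), (w_1ℓ, d+z_1ℓ, w_1, 0), (0, 0, 1+x_2ℓ, b_2ℓ+y_2ℓ²), (0, 0, w_2, d+z_2ℓ); in particular, all entries of M_q^{-1}·X·M_q lie in Z_ℓ. -/
open Matrix

/-!
Write `M_q` in `2 × 2` blocks as `[1, P * D; 0, D]`, where `P = diag(1, 0)` and `D = diag(1/ℓ, 1)`.
Conjugating `diag(A, B)` by such a matrix gives `[A, (A * P - P * B) * D; 0, D⁻¹ * B * D]`.
The factor `1/ℓ` in `D` only meets the first columns of `A * P - P * B` and of `B`, and it is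
absorbed there: the upper left entries of `A` and `B` agree modulo `ℓ`, and the lower left ones
vanish modulo `ℓ`.
-/

section Blocks

variable {m n R : Type*} [Fintype m] [Fintype n] [DecidableEq m] [DecidableEq n] [CommRing R]

theorem isUnit_det_fromBlocks_one_zero₂₁ (E : Matrix m n R) {D : Matrix n n R}
    (hD : IsUnit D.det) : IsUnit (fromBlocks 1 E 0 D).det := by
  rwa [det_fromBlocks_zero₂₁, det_one, one_mul]

theorem inv_mul_fromBlocks_diagonal_mul (A : Matrix m m R) (B : Matrix n n R) (P : Matrix m n R)
    {D : Matrix n n R} (hD : IsUnit D.det) :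
    (fromBlocks 1 (P * D) 0 D)⁻¹ * fromBlocks A 0 0 B * fromBlocks 1 (P * D) 0 D =
      fromBlocks A ((A * P - P * B) * D) 0 (D⁻¹ * B * D) := by
  have inv_eq : (fromBlocks (1 : Matrix m m R) (P * D) 0 D)⁻¹ = fromBlocks 1 (-P) 0 D⁻¹ := by
    have isUnit_iff : IsUnit (1 : Matrix m m R) ↔ IsUnit D :=
      iff_of_true isUnit_one ((isUnit_iff_isUnit_det D).mpr hD)
    rw [inv_fromBlocks_zero₂₁_of_isUnit_iff _ _ _ isUnit_iff, inv_one, Matrix.one_mul,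
      mul_nonsing_inv_cancel_right _ _ hD]
  simp [inv_eq, fromBlocks_multiply, Matrix.mul_assoc, Matrix.sub_mul, ← sub_eq_add_neg]

theorem inv_reindex_mul_reindex_mul_reindex (e : m ≃ n) (M X : Matrix m m R) :
    (reindex e e M)⁻¹ * reindex e e X * reindex e e M = reindex e e (M⁻¹ * X * M) := by
  rw [inv_reindex]
  simp only [reindex_apply, submatrix_mul_equiv]

end Blocks

theorem reindex_fromBlocks_fin_two {α : Type*} (A B C D : Matrix (Fin 2) (Fin 2) α) :
    reindex finSumFinEquiv finSumFinEquiv (fromBlocks A B C D) =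
      !![A 0 0, A 0 1, B 0 0, B 0 1;
         A 1 0, A 1 1, B 1 0, B 1 1;
         C 0 0, C 0 1, D 0 0, D 0 1;
         C 1 0, C 1 1, D 1 0, D 1 1] := by
  ext i j
  fin_cases i <;> fin_cases j <;> rfl

section Field

variable {K : Type*} [Field K] {ℓ : K}

/-- The change-of-basis matrix `M_q` on rational Tate modules of the quotient isogeny `E₁ × E₂ → A`,
over an arbitrary field and for an arbitrary scalar `ℓ`; at `ℓ = 0` the inverse `ℓ⁻¹` is `0` and the
matrix is singular. -/
def Mq (ℓ : K) : Matrix (Fin 4) (Fin 4) K :=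
  !![1, 0, ℓ⁻¹, 0;
     0, 1, 0, 0;
     0, 0, ℓ⁻¹, 0;
     0, 0, 0, 1]

theorem Mq_eq_reindex_fromBlocks (ℓ : K) :
    Mq ℓ = reindex finSumFinEquiv finSumFinEquiv
      (fromBlocks 1 (!![1, 0; 0, 0] * !![ℓ⁻¹, 0; 0, 1]) 0 !![ℓ⁻¹, 0; 0, 1]) := by
  rw [reindex_fromBlocks_fin_two]
  simp [Mq]

theorem isUnit_det_diag_inv_one (hℓ : ℓ ≠ 0) : IsUnit (!![ℓ⁻¹, 0; 0, 1] : Matrix _ _ K).det := by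
  simpa [det_fin_two_of] using hℓ

theorem isUnit_det_Mq (hℓ : ℓ ≠ 0) : IsUnit (Mq ℓ).det := by
  rw [Mq_eq_reindex_fromBlocks, det_reindex_self]
  exact isUnit_det_fromBlocks_one_zero₂₁ _ (isUnit_det_diag_inv_one hℓ)

theorem inv_diag_mul_mul_diag_inv_one (hℓ : ℓ ≠ 0) (a b w d : K) :
    !![ℓ⁻¹, 0; 0, 1]⁻¹ * !![a, b; w * ℓ, d] * !![ℓ⁻¹, 0; 0, 1] = !![a, b * ℓ; w, d] := by
  have inv_eq : !![ℓ⁻¹, 0; 0, 1]⁻¹ = !![ℓ, 0; 0, 1] :=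
    inv_eq_left_inv (by simp [hℓ, one_fin_two])
  simp [inv_eq, hℓ, mul_comm ℓ]

theorem mul_proj_sub_proj_mul_mul_diag_inv_one (hℓ : ℓ ≠ 0) (a b₁ b₂ w₁ w₂ x₁ x₂ d₁ d₂ : K) :
    (!![a + x₁ * ℓ, b₁; w₁ * ℓ, d₁] * !![1, 0; 0, 0] -
        !![1, 0; 0, 0] * !![a + x₂ * ℓ, b₂; w₂ * ℓ, d₂]) * !![ℓ⁻¹, 0; 0, 1] =
      !![x₁ - x₂, -b₂; w₁, 0] := by
  simp [hℓ, ← sub_mul]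

theorem inv_Mq_mul_mul_Mq (hℓ : ℓ ≠ 0) (a b₁ b₂ w₁ w₂ x₁ x₂ d₁ d₂ : K) :
    (Mq ℓ)⁻¹ *
        !![a + x₁ * ℓ, b₁, 0, 0;
           w₁ * ℓ, d₁, 0, 0;
           0, 0, a + x₂ * ℓ, b₂;
           0, 0, w₂ * ℓ, d₂] * Mq ℓ =
      !![a + x₁ * ℓ, b₁, x₁ - x₂, -b₂;
         w₁ * ℓ, d₁, w₁, 0;
         0, 0, a + x₂ * ℓ, b₂ * ℓ;
         0, 0, w₂, d₂] := by
  have X_eq : !![a + x₁ * ℓ, b₁, 0, 0; w₁ * ℓ, d₁, 0, 0; 0, 0, a + x₂ * ℓ, b₂; 0, 0, w₂ * ℓ, d₂] =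
      reindex finSumFinEquiv finSumFinEquiv
        (fromBlocks !![a + x₁ * ℓ, b₁; w₁ * ℓ, d₁] 0 0 !![a + x₂ * ℓ, b₂; w₂ * ℓ, d₂]) := by
    rw [reindex_fromBlocks_fin_two]
    rfl
  rw [X_eq, Mq_eq_reindex_fromBlocks, inv_reindex_mul_reindex_mul_reindex,
    inv_mul_fromBlocks_diagonal_mul _ _ _ (isUnit_det_diag_inv_one hℓ),
    mul_proj_sub_proj_mul_mul_diag_inv_one hℓ, inv_diag_mul_mul_diag_inv_one hℓ,
    reindex_fromBlocks_fin_two]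
  rfl

end Field

theorem conjugation_by_Mq_general {R K : Type*} [CommRing R] [Field K] (f : R →+* K) {ℓ : R}
    (hℓ : f ℓ ≠ 0) (a b₁ b₂ w₁ w₂ x₁ x₂ d₁ d₂ : R) :
    IsUnit (Mq (f ℓ)).det ∧
      (Mq (f ℓ))⁻¹ *
          (!![a + x₁ * ℓ, b₁, 0, 0;
              w₁ * ℓ, d₁, 0, 0;
              0, 0, a + x₂ * ℓ, b₂;
              0, 0, w₂ * ℓ, d₂] : Matrix (Fin 4) (Fin 4) R).map f * Mq (f ℓ) =
        (!![a + x₁ * ℓ, b₁, x₁ - x₂, -b₂;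
            w₁ * ℓ, d₁, w₁, 0;
            0, 0, a + x₂ * ℓ, b₂ * ℓ;
            0, 0, w₂, d₂] : Matrix (Fin 4) (Fin 4) R).map f := by
  refine ⟨isUnit_det_Mq hℓ, ?_⟩
  convert inv_Mq_mul_mul_Mq hℓ (f a) (f b₁) (f b₂) (f w₁) (f w₂) (f x₁) (f x₂) (f d₁) (f d₂)
    using 3 <;> simp [← Matrix.ext_iff, Fin.forall_fin_succ]

/-- Conjugating the block-diagonal matrix `X` (with blocks
`!![1 + xᵢℓ, bᵢ + yᵢℓ; wᵢℓ, d + zᵢℓ]`, `d ∈ ℤ_ℓ^×`) by the change-of-basis matrix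
`M_q = !![1,0,1/ℓ,0; 0,1,0,0; 0,0,1/ℓ,0; 0,0,0,1]` gives
`M_q⁻¹ X M_q = !![1+x₁ℓ, b₁+y₁ℓ, x₁-x₂, -b₂-y₂ℓ; w₁ℓ, d+z₁ℓ, w₁, 0;`
`0, 0, 1+x₂ℓ, b₂ℓ+y₂ℓ²; 0, 0, w₂, d+z₂ℓ]`, whose entries all lie in `ℤ_ℓ`;
moreover `M_q` is invertible. -/
theorem conjugation_by_Mq (p : ℕ) [Fact p.Prime]
    (d b₁ b₂ w₁ w₂ x₁ x₂ y₁ y₂ z₁ z₂ : ℤ_[p]) (hd : IsUnit d) :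
    IsUnit (!![(1 : ℚ_[p]), 0, (p : ℚ_[p])⁻¹, 0;
               0, 1, 0, 0;
               0, 0, (p : ℚ_[p])⁻¹, 0;
               0, 0, 0, 1] : Matrix (Fin 4) (Fin 4) ℚ_[p]).det ∧
    (!![(1 : ℚ_[p]), 0, (p : ℚ_[p])⁻¹, 0;
        0, 1, 0, 0;
        0, 0, (p : ℚ_[p])⁻¹, 0;
        0, 0, 0, 1] : Matrix (Fin 4) (Fin 4) ℚ_[p])⁻¹ *
      ((!![1 + x₁ * p, b₁ + y₁ * p, 0, 0;
           w₁ * p, d + z₁ * p, 0, 0;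
           0, 0, 1 + x₂ * p, b₂ + y₂ * p;
           0, 0, w₂ * p, d + z₂ * p] : Matrix (Fin 4) (Fin 4) ℤ_[p]).map
        ((↑·) : ℤ_[p] → ℚ_[p])) *
      (!![(1 : ℚ_[p]), 0, (p : ℚ_[p])⁻¹, 0;
          0, 1, 0, 0;
          0, 0, (p : ℚ_[p])⁻¹, 0;
          0, 0, 0, 1] : Matrix (Fin 4) (Fin 4) ℚ_[p]) =
      (!![1 + x₁ * p, b₁ + y₁ * p, x₁ - x₂, -b₂ - y₂ * p;
          w₁ * p, d + z₁ * p, w₁, 0;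
          0, 0, 1 + x₂ * p, b₂ * p + y₂ * p ^ 2;
          0, 0, w₂, d + z₂ * p] : Matrix (Fin 4) (Fin 4) ℤ_[p]).map
        ((↑·) : ℤ_[p] → ℚ_[p]) := by
  have hp : PadicInt.Coe.ringHom (p : ℤ_[p]) ≠ 0 := by simp [NeZero.ne p]
  rw [← neg_add', show b₂ * p + y₂ * p ^ 2 = (b₂ + y₂ * p) * p by ring]
  exact conjugation_by_Mq_general PadicInt.Coe.ringHom hp 1 _ _ w₁ w₂ x₁ x₂ _ _
end

section
/- Let A_0 be a divisible abelian group such that the n-torsion subgroup A_0[n] is finite for every positive integer n. Define the adelic Tate module T̂A_0 as the subgroup of ∏_{n≥1} A_0[n] consisting of sequences (P_n)_{n≥1} with (n/m)·P_n = P_m whenever m divides n, and set V̂A_0 := T̂A_0 ⊗_Z Q, regarding T̂A_0 as a subgroup of V̂A_0 via x ↦ x ⊗ 1 (this map is injective since T̂A_0 is torsion-free). Let C be the category whose objects are pairs (B, φ) with B an abelian group and φ : A_0 → B a surjective group homomorphism with finite kernel, and whose morphisms (B, φ) → (B', φ') are the group homomorphisms ψ : B → B' with ψ ∘ φ = φ'.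 Let D be the category whose objects are the subgroups L of V̂A_0 with T̂A_0 ⊆ L and L/T̂A_0 finite, and whose morphisms are the inclusions. Then: (i) for each object (B, φ) of C, the induced map V̂φ : V̂A_0 → V̂B is an isomorphism and Λφ := (V̂φ)^{-1}(T̂B) is an object of D; (ii) the assignment (B, φ) ↦ Λφ, sending a morphism ψ to the corresponding inclusion Λφ ⊆ Λφ', is a functor C → D; and (iii) this functor is an equivalence of categories. -/
/-- The adelic Tate module of an abelian group `A`: coherent sequences `(P_n)_{n ≥ 1}` with
`P n ∈ A[n]` and `(n / m) • P n = P m` whenever `m ∣ n` (the `0`-th component is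
irrelevant and normalized to `0`). -/
def AdelicTate (A : Type*) [AddCommGroup A] : AddSubgroup (ℕ → A) where
  carrier := {P | P 0 = 0 ∧ (∀ n, n • P n = 0) ∧
    ∀ m n : ℕ, 0 < m → 0 < n → m ∣ n → (n / m) • P n = P m}
  zero_mem' := ⟨rfl, fun _ => smul_zero _, fun m n _ _ _ => smul_zero _⟩
  add_mem' := by
    rintro P Q ⟨hP0, hP1, hP2⟩ ⟨hQ0, hQ1, hQ2⟩
    refine ⟨?_, fun n => ?_, fun m n hm hn hmn => ?_⟩
    · show P 0 + Q 0 = 0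
      rw [hP0, hQ0, add_zero]
    · show n • (P n + Q n) = 0
      rw [smul_add, hP1 n, hQ1 n, add_zero]
    · show (n / m) • (P n + Q n) = P m + Q m
      rw [smul_add, hP2 m n hm hn hmn, hQ2 m n hm hn hmn]
  neg_mem' := by
    rintro P ⟨hP0, hP1, hP2⟩
    refine ⟨?_, fun n => ?_, fun m n hm hn hmn => ?_⟩
    · show -(P 0) = 0
      rw [hP0, neg_zero]
    · show n • (-(P n)) = 0
      rw [smul_neg, hP1 n, neg_zero]
    · show (n / m) • (-(P n)) = -(P m)
      rw [smul_neg, hP2 m n hm hn hmn]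

/-- The map induced on adelic Tate modules by a group homomorphism, applied
componentwise. -/
def adelicMap {A B : Type*} [AddCommGroup A] [AddCommGroup B] (φ : A →+ B) :
    AdelicTate A →+ AdelicTate B where
  toFun P := ⟨fun n => φ (P.1 n), by
    obtain ⟨h0, h1, h2⟩ := P.2
    exact ⟨by show φ (P.1 0) = 0; rw [h0, map_zero], fun n => by rw [← map_nsmul, h1 n, map_zero],
      fun m n hm hn hmn => by rw [← map_nsmul, h2 m n hm hn hmn]⟩⟩
  map_zero' := Subtype.ext (funext fun _ => map_zero φ)
  map_add' P Q := Subtype.ext (funext fun _ => map_add φ _ _)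

/-- The additive map `M → M ⊗_ℤ ℚ`, `x ↦ x ⊗ c`. -/
noncomputable def tmulQ {M : Type*} [AddCommGroup M] (c : ℚ) : M →+ TensorProduct ℤ M ℚ where
  toFun x := x ⊗ₜ c
  map_zero' := TensorProduct.zero_tmul _ c
  map_add' x y := TensorProduct.add_tmul x y c

/-- The `m`-torsion subgroup `A[m]` of an abelian group `A`. -/
def torsionSub (m : ℕ) (A : Type*) [AddCommGroup A] : AddSubgroup A where
  carrier := {a | m • a = 0}
  zero_mem' := smul_zero m
  add_mem' := by
    rintro a b (ha : m • a = 0) (hb : m • b = 0)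
    show m • (a + b) = 0
    rw [smul_add, ha, hb, add_zero]
  neg_mem' := by
    rintro a (ha : m • a = 0)
    show m • (-a) = 0
    rw [smul_neg, ha, neg_zero]

/-- The category of "isogenous quotients" of a fixed abelian group `A₀`: objects are pairs
`(B, φ)` with `φ : A₀ → B` a surjective homomorphism with finite kernel. -/
structure IsogenousQuotient (A₀ : Type) [AddCommGroup A₀] : Type 1 where
  carrier : Type
  [addCommGroup : AddCommGroup carrier]
  hom : A₀ →+ carrier
  surjective : Function.Surjective hom
  finiteKernel : Finite hom.ker

attribute [instance] IsogenousQuotient.addCommGroup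

open CategoryTheory

/-- Morphisms `(B, φ) → (B', φ')` are homomorphisms `ψ : B → B'` with `ψ ∘ φ = φ'`. -/
instance IsogenousQuotient.category (A₀ : Type) [AddCommGroup A₀] :
    Category (IsogenousQuotient A₀) where
  Hom X Y := {ψ : X.carrier →+ Y.carrier // ψ.comp X.hom = Y.hom}
  id X := ⟨AddMonoidHom.id _, AddMonoidHom.id_comp _⟩
  comp f g := ⟨g.1.comp f.1, by rw [AddMonoidHom.comp_assoc, f.2]; exact g.2⟩
  id_comp f := Subtype.ext (AddMonoidHom.comp_id _)
  comp_id f := Subtype.ext (AddMonoidHom.id_comp _)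
  assoc f g h := Subtype.ext (AddMonoidHom.comp_assoc _ _ _).symm

/-- The category of lattices in `V̂A₀ = T̂A₀ ⊗_ℤ ℚ` containing `T̂A₀` with finite quotient;
morphisms are inclusions (it is a preorder category). -/
abbrev AdelicLattice (A₀ : Type) [AddCommGroup A₀] : Type :=
  {L : AddSubgroup (TensorProduct ℤ (AdelicTate A₀) ℚ) //
    (tmulQ (M := AdelicTate A₀) 1).range ≤ L ∧
    Finite (L ⧸ ((tmulQ (M := AdelicTate A₀) 1).range.addSubgroupOf L))}

/-- The lattice `Λφ := (V̂φ)⁻¹(T̂B) ⊆ V̂A₀` attached to a surjection `φ : A₀ → B` with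
finite kernel, where `T̂B` is viewed inside `V̂B = T̂B ⊗_ℤ ℚ` via `x ↦ x ⊗ 1`. -/
noncomputable def LambdaObj (A₀ : Type) [AddCommGroup A₀] (X : IsogenousQuotient A₀) :
    AddSubgroup (TensorProduct ℤ (AdelicTate A₀) ℚ) :=
  AddSubgroup.comap
    (LinearMap.rTensor (R := ℤ) ℚ (adelicMap X.hom).toIntLinearMap).toAddMonoidHom
    (tmulQ (M := AdelicTate X.carrier) 1).range

/-!
The map `P ⊗ (r / n) ↦ r • P_n` is a natural homomorphism `eval : V̂A → A` with kernel `T̂A`.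
Naturality gives `Λφ = eval⁻¹(ker φ)`, so `Λφ / T̂A₀` embeds into `ker φ`, and a lattice `L`
containing `T̂A₀` is the preimage of the finite subgroup `eval(L)`. If the torsion of `A₀` is
divisible, then `eval` maps onto it: by injectivity of divisible groups, every torsion element `a`
is the value at `1` of a homomorphism `f : ℚ → A₀`, and `f` comes from `V̂A₀` because `T̂A₀` is the
group of homomorphisms `ℚ → A₀` killing `1`. Hence a finite subgroup of `A₀` is determined by its
preimage under `eval`. Finally, `V̂φ` is invertible because some `N ≠ 0` kills `ker φ`, so there is
`ψ : B → A₀` such that `ψ ∘ φ` and `φ ∘ ψ` are both multiplication by `N`.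
-/

open scoped TensorProduct

section AbelianGroups

variable {A B C : Type*} [AddCommGroup A] [AddCommGroup B] [AddCommGroup C]

lemma exists_comp_eq_of_ker_le {φ : A →+ B} (hφ : Function.Surjective φ) {χ : A →+ C}
    (hker : φ.ker ≤ χ.ker) : ∃ ψ : B →+ C, ψ.comp φ = χ :=
  ⟨φ.liftOfSurjective hφ ⟨χ, hker⟩, φ.liftOfRightInverse_comp _ _ ⟨χ, hker⟩⟩

lemma exists_comp_eq_nsmul_of_finite_ker {φ : A →+ B} (hφ : Function.Surjective φ)
    [Finite φ.ker] :
    ∃ (N : ℕ) (ψ : B →+ A), N ≠ 0 ∧ ψ.comp φ = N • AddMonoidHom.id A ∧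
      φ.comp ψ = N • AddMonoidHom.id B := by
  have ker_le : φ.ker ≤ (Nat.card φ.ker • AddMonoidHom.id A).ker := fun a ha =>
    congrArg Subtype.val (card_nsmul_eq_zero' (x := (⟨a, ha⟩ : φ.ker)))
  obtain ⟨ψ, hψ⟩ := exists_comp_eq_of_ker_le hφ ker_le
  refine ⟨Nat.card φ.ker, ψ, Nat.card_pos.ne', hψ, ?_⟩
  rw [← AddMonoidHom.cancel_right hφ, AddMonoidHom.comp_assoc, hψ]
  ext a
  simp

lemma finite_quotient_ker_addSubgroupOf_iff (f : A →+ B) (L : AddSubgroup A) :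
    Finite (L ⧸ f.ker.addSubgroupOf L) ↔ Finite (L.map f) := by
  rw [← AddMonoidHom.ker_domRestrict, ← AddMonoidHom.domRestrict_range]
  exact (QuotientAddGroup.quotientKerEquivRange (f.domRestrict L)).toEquiv.finite_iff

lemma exists_ratHom_apply_one_eq [DivisibleBy A ℤ] (a : A) : ∃ f : ℚ →+ A, f 1 = a := by
  obtain ⟨f, hf⟩ := (Module.Baer.of_divisible A).extension_property_addMonoidHom
    (Int.castAddHom ℚ) Int.cast_injective (zmultiplesHom A a)
  exact ⟨f, by simpa using DFunLike.congr_fun hf 1⟩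

lemma exists_ratHom_apply_one_eq_of_isOfFinAddOrder
    (hdiv : ∀ a : A, IsOfFinAddOrder a → ∀ n : ℕ, 0 < n → ∃ b, n • b = a)
    {a : A} (ha : IsOfFinAddOrder a) : ∃ f : ℚ →+ A, f 1 = a := by
  have nsmul_surjective {n : ℕ} (hn : n ≠ 0) :
      Function.Surjective fun b : AddCommGroup.torsion A => n • b := by
    rintro ⟨c, hc⟩
    obtain ⟨b, rfl⟩ := hdiv c hc n (Nat.pos_of_ne_zero hn)
    exact ⟨⟨b, (isOfFinAddOrder_nsmul.1 hc).resolve_right hn⟩, rfl⟩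
  let := divisibleByOfSMulRightSurj (AddCommGroup.torsion A) ℕ nsmul_surjective
  let := AddGroup.divisibleByIntOfDivisibleByNat (AddCommGroup.torsion A)
  obtain ⟨f, hf⟩ := exists_ratHom_apply_one_eq (⟨a, ha⟩ : AddCommGroup.torsion A)
  exact ⟨(AddCommGroup.torsion A).subtype.comp f, congrArg Subtype.val hf⟩

end AbelianGroups

section TensorRat

variable {M N : Type*} [AddCommGroup M] [AddCommGroup N]

lemma nsmul_tmul_inv (x : M) {n : ℕ} (hn : n ≠ 0) (q : ℚ) :
    (n • x) ⊗ₜ[ℤ] ((n : ℚ)⁻¹ * q) = x ⊗ₜ[ℤ] q := by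
  rw [TensorProduct.smul_tmul, nsmul_eq_mul, mul_inv_cancel_left₀ (Nat.cast_ne_zero.2 hn)]

lemma exists_tmul_inv_natCast_eq (v : M ⊗[ℤ] ℚ) :
    ∃ (x : M) (n : ℕ), n ≠ 0 ∧ x ⊗ₜ[ℤ] (n : ℚ)⁻¹ = v := by
  induction v using TensorProduct.induction_on with
  | zero => exact ⟨0, 1, one_ne_zero, TensorProduct.zero_tmul _ _⟩
  | tmul x q =>
    refine ⟨q.num • x, q.den, q.den_ne_zero, ?_⟩
    rw [TensorProduct.smul_tmul, zsmul_eq_mul, ← div_eq_mul_inv, Rat.num_div_den]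
  | add _ _ hu hv =>
    obtain ⟨x, m, hm, rfl⟩ := hu
    obtain ⟨y, n, hn, rfl⟩ := hv
    refine ⟨n • x + m • y, n * m, mul_ne_zero hn hm, ?_⟩
    rw [TensorProduct.add_tmul, Nat.cast_mul, mul_inv, nsmul_tmul_inv x hn, mul_comm,
      nsmul_tmul_inv y hm]

lemma rTensor_rat_nsmul_id_bijective (M : Type*) [AddCommGroup M] {n : ℕ} (hn : n ≠ 0) :
    Function.Bijective ((n • LinearMap.id : M →ₗ[ℤ] M).rTensor ℚ) := by
  let e : ℚ ≃ₗ[ℤ] ℚ :=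
    (LinearEquiv.smulOfNeZero ℚ ℚ (n : ℚ) (Nat.cast_ne_zero.2 hn)).restrictScalars ℤ
  have rTensor_eq : (n • LinearMap.id : M →ₗ[ℤ] M).rTensor ℚ = (e.lTensor M).toLinearMap :=
    TensorProduct.ext' fun x q =>
      (TensorProduct.smul_tmul n x q).trans (congrArg (x ⊗ₜ[ℤ] ·) (nsmul_eq_mul n q))
  rw [rTensor_eq]
  exact (e.lTensor M).bijective

lemma rTensor_rat_bijective {f : M →ₗ[ℤ] N} {g : N →ₗ[ℤ] M} {n : ℕ} (hn : n ≠ 0)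
    (hgf : g ∘ₗ f = n • LinearMap.id) (hfg : f ∘ₗ g = n • LinearMap.id) :
    Function.Bijective (f.rTensor ℚ) := by
  have bijective_gf : Function.Bijective (g.rTensor ℚ ∘ f.rTensor ℚ) := by
    rw [← LinearMap.coe_comp, ← LinearMap.rTensor_comp, hgf]
    exact rTensor_rat_nsmul_id_bijective M hn
  have bijective_fg : Function.Bijective (f.rTensor ℚ ∘ g.rTensor ℚ) := by
    rw [← LinearMap.coe_comp, ← LinearMap.rTensor_comp, hfg]
    exact rTensor_rat_nsmul_id_bijective N hn
  exact ⟨bijective_gf.injective.of_comp, bijective_fg.surjective.of_comp⟩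

end TensorRat

namespace AdelicTate

variable {A B : Type*} [AddCommGroup A] [AddCommGroup B]

-- The case `m = 0`, `k = 2` of the last condition forces `P 0 = 0`.
lemma mem_iff {P : ℕ → A} :
    P ∈ AdelicTate A ↔ P 1 = 0 ∧ ∀ m k : ℕ, k ≠ 0 → k • P (k * m) = P m := by
  constructor
  · rintro ⟨apply_zero, nsmul_self, coherent⟩
    refine ⟨by simpa using nsmul_self 1, fun m k hk => ?_⟩
    rcases Nat.eq_zero_or_pos m with rfl | hm
    · simp [apply_zero]
    · have hkm := coherent m (k * m) hm (by positivity) (Nat.dvd_mul_left m k)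
      rwa [Nat.mul_div_cancel k hm] at hkm
  · rintro ⟨apply_one, coherent⟩
    have apply_zero : P 0 = 0 := by simpa [two_nsmul] using coherent 0 2 two_ne_zero
    refine ⟨apply_zero, fun n => ?_, fun m n hm hn hmn => ?_⟩
    · rcases eq_or_ne n 0 with rfl | hn
      · exact zero_nsmul _
      · simpa [apply_one] using coherent 1 n hn
    · obtain ⟨k, rfl⟩ := hmn
      rw [Nat.mul_div_cancel_left k hm, mul_comm]
      exact coherent m k (Nat.pos_of_mul_pos_left hn).ne'

lemma nsmul_apply_mul (P : AdelicTate A) (m : ℕ) {k : ℕ} (hk : k ≠ 0) :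
    k • P.1 (k * m) = P.1 m :=
  (mem_iff.1 P.2).2 m k hk

lemma exists_nsmul_eq_of_apply_eq_zero {P : AdelicTate A} {n : ℕ} (hn : n ≠ 0)
    (hP : P.1 n = 0) : ∃ Q : AdelicTate A, n • Q = P := by
  refine ⟨⟨fun m => P.1 (n * m), mem_iff.2 ⟨by rwa [mul_one], fun m k hk => ?_⟩⟩, ?_⟩
  · rw [mul_left_comm, nsmul_apply_mul P (n * m) hk]
  · exact Subtype.ext (funext fun m => nsmul_apply_mul P m hn)

lemma num_zsmul_apply_den (P : AdelicTate A) {q : ℚ} {r : ℤ} {n : ℕ} (hn : n ≠ 0)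
    (hq : q = r / n) : q.num • P.1 q.den = r • P.1 n := by
  have hq_divInt : q = Rat.divInt r n := by rw [hq, Rat.divInt_eq_div, Int.cast_natCast]
  obtain ⟨c, rfl, n_eq⟩ := Rat.num_den_mk (Int.natCast_ne_zero.2 hn) hq_divInt
  have c_pos : 0 < c := by
    have hc : 0 < c * (q.den : ℤ) := by omega
    exact pos_of_mul_pos_left hc q.den.cast_nonneg
  lift c to ℕ using c_pos.le
  obtain rfl : n = c * q.den := mod_cast n_eq
  rw [mul_comm, mul_zsmul, natCast_zsmul, nsmul_apply_mul P q.den (mod_cast c_pos.ne')]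

/-- The homomorphism `ℚ → A`, `r / n ↦ r • P_n`, attached to a coherent sequence `P`; it vanishes
at `1`, and realizes `T̂A` as `Hom(ℚ / ℤ, A)`. -/
def toRatHom : AdelicTate A →+ ℚ →+ A where
  toFun P := AddMonoidHom.mk' (fun q => q.num • P.1 q.den) fun p q => by
    have hden : p.den * q.den ≠ 0 := mul_ne_zero p.den_ne_zero q.den_ne_zero
    have hp : p = (p.num * q.den : ℤ) / (p.den * q.den : ℕ) := by
      push_cast
      rw [mul_div_mul_right _ _ (Nat.cast_ne_zero.2 q.den_ne_zero), Rat.num_div_den]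
    have hq : q = (p.den * q.num : ℤ) / (p.den * q.den : ℕ) := by
      push_cast
      rw [mul_div_mul_left _ _ (Nat.cast_ne_zero.2 p.den_ne_zero), Rat.num_div_den]
    have hpq : p + q = (p.num * q.den + p.den * q.num : ℤ) / (p.den * q.den : ℕ) := by
      rw [Int.cast_add, add_div, ← hp, ← hq]
    rw [num_zsmul_apply_den P hden hpq, num_zsmul_apply_den P hden hp,
      num_zsmul_apply_den P hden hq, add_zsmul]
  map_zero' := AddMonoidHom.ext fun _ => smul_zero _
  map_add' _ _ := AddMonoidHom.ext fun _ => smul_add _ _ _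

lemma toRatHom_apply (P : AdelicTate A) (q : ℚ) : toRatHom P q = q.num • P.1 q.den := rfl

lemma toRatHom_inv_natCast (P : AdelicTate A) {n : ℕ} (hn : n ≠ 0) :
    toRatHom P (n : ℚ)⁻¹ = P.1 n := by
  rw [toRatHom_apply, Rat.inv_natCast_num_of_pos (Nat.pos_of_ne_zero hn),
    Rat.inv_natCast_den_of_pos (Nat.pos_of_ne_zero hn), one_zsmul]

/-- The coherent sequence `n ↦ f (1 / n)` attached to a homomorphism `f : ℚ → A` vanishing at `1`;
its `0`-th component vanishes because `(0 : ℚ)⁻¹ = 0`. -/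
def ofRatHom (f : ℚ →+ A) (hf : f 1 = 0) : AdelicTate A :=
  ⟨fun n => f (n : ℚ)⁻¹, mem_iff.2 ⟨by simpa using hf, fun m k hk => by
    rw [← map_nsmul, nsmul_eq_mul, Nat.cast_mul, mul_inv,
      mul_inv_cancel_left₀ (Nat.cast_ne_zero.2 hk)]⟩⟩

lemma toRatHom_ofRatHom (f : ℚ →+ A) (hf : f 1 = 0) : toRatHom (ofRatHom f hf) = f := by
  ext q
  change q.num • f (q.den : ℚ)⁻¹ = f q
  rw [← map_zsmul, zsmul_eq_mul, ← div_eq_mul_inv, Rat.num_div_den]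

/-- The evaluation map `V̂A → A`, `P ⊗ (r / n) ↦ r • P_n`. -/
def eval (A : Type*) [AddCommGroup A] : AdelicTate A ⊗[ℤ] ℚ →+ A :=
  TensorProduct.liftAddHom toRatHom fun r P q => by
    rw [map_zsmul, AddMonoidHom.zsmul_apply, map_zsmul]

@[simp]
lemma eval_tmul (P : AdelicTate A) (q : ℚ) : eval A (P ⊗ₜ q) = toRatHom P q := rfl

lemma ker_eval (A : Type*) [AddCommGroup A] :
    (eval A).ker = (tmulQ (M := AdelicTate A) 1).range := by
  ext v
  constructor
  · intro hv
    obtain ⟨P, n, hn, rfl⟩ := exists_tmul_inv_natCast_eq v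
    rw [AddMonoidHom.mem_ker, eval_tmul, toRatHom_inv_natCast P hn] at hv
    obtain ⟨Q, rfl⟩ := exists_nsmul_eq_of_apply_eq_zero hn hv
    exact ⟨Q, by rw [← mul_one (n : ℚ)⁻¹, nsmul_tmul_inv Q hn]; rfl⟩
  · rintro ⟨P, rfl⟩
    change toRatHom P 1 = 0
    simpa [toRatHom_apply] using (mem_iff.1 P.2).1

lemma eval_rTensor_adelicMap (φ : A →+ B) (v : AdelicTate A ⊗[ℤ] ℚ) :
    eval B ((adelicMap φ).toIntLinearMap.rTensor ℚ v) = φ (eval A v) := by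
  induction v using TensorProduct.induction_on with
  | zero => simp only [map_zero]
  | tmul P q => exact (map_zsmul φ q.num (P.1 q.den)).symm
  | add u v hu hv => simp only [map_add, hu, hv]

lemma comap_rTensor_adelicMap_range_tmulQ (φ : A →+ B) :
    (tmulQ (M := AdelicTate B) 1).range.comap
        ((adelicMap φ).toIntLinearMap.rTensor ℚ).toAddMonoidHom =
      φ.ker.comap (eval A) := by
  rw [← ker_eval]
  ext v
  exact iff_of_eq (congrArg (· = 0) (eval_rTensor_adelicMap φ v))

lemma mem_range_eval_of_ratHom {f : ℚ →+ A} (hf : IsOfFinAddOrder (f 1)) :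
    f 1 ∈ (eval A).range := by
  obtain ⟨n, hn, hn_smul⟩ := hf.exists_nsmul_eq_zero
  refine ⟨ofRatHom (n • f) hn_smul ⊗ₜ (n : ℚ)⁻¹, ?_⟩
  rw [eval_tmul, toRatHom_ofRatHom, AddMonoidHom.nsmul_apply, ← map_nsmul, nsmul_eq_mul,
    mul_inv_cancel₀ (Nat.cast_ne_zero.2 hn.ne')]

lemma torsion_le_range_eval
    (hdiv : ∀ a : A, IsOfFinAddOrder a → ∀ n : ℕ, 0 < n → ∃ b, n • b = a) :
    AddCommGroup.torsion A ≤ (eval A).range := by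
  intro a ha
  obtain ⟨f, rfl⟩ := exists_ratHom_apply_one_eq_of_isOfFinAddOrder hdiv ha
  exact mem_range_eval_of_ratHom ha

lemma rTensor_adelicMap_bijective {φ : A →+ B} (hφ : Function.Surjective φ) [Finite φ.ker] :
    Function.Bijective ((adelicMap φ).toIntLinearMap.rTensor ℚ) := by
  obtain ⟨n, ψ, hn, hψφ, hφψ⟩ := exists_comp_eq_nsmul_of_finite_ker hφ
  refine rTensor_rat_bijective (g := (adelicMap ψ).toIntLinearMap) hn ?_ ?_
  · exact LinearMap.ext fun P => Subtype.ext (funext fun m => DFunLike.congr_fun hψφ (P.1 m))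
  · exact LinearMap.ext fun P => Subtype.ext (funext fun m => DFunLike.congr_fun hφψ (P.1 m))

end AdelicTate

namespace IsogenousQuotient

variable {A₀ : Type} [AddCommGroup A₀]

instance isThin : Quiver.IsThin (IsogenousQuotient A₀) := fun X _ =>
  ⟨fun f g => Subtype.ext ((AddMonoidHom.cancel_right X.surjective).1 (f.2.trans g.2.symm))⟩

lemma nonempty_hom_iff {X Y : IsogenousQuotient A₀} :
    Nonempty (X ⟶ Y) ↔ X.hom.ker ≤ Y.hom.ker := by
  constructor
  · rintro ⟨ψ, hψ⟩
    exact hψ ▸ AddMonoidHom.ker_le_comap X.hom ψ.ker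
  · intro hker
    obtain ⟨ψ, hψ⟩ := exists_comp_eq_of_ker_le X.surjective hker
    exact ⟨⟨ψ, hψ⟩⟩

/-- The quotient of `A₀` by a finite subgroup, as an object of the category of isogenous
quotients. -/
def ofFiniteSubgroup (K : AddSubgroup A₀) [Finite K] : IsogenousQuotient A₀ where
  carrier := A₀ ⧸ K
  hom := QuotientAddGroup.mk' K
  surjective := QuotientAddGroup.mk'_surjective K
  finiteKernel := by rwa [QuotientAddGroup.ker_mk']

lemma ker_ofFiniteSubgroup_hom (K : AddSubgroup A₀) [Finite K] :
    (ofFiniteSubgroup K).hom.ker = K :=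
  QuotientAddGroup.ker_mk' K

lemma ker_hom_le_torsion (X : IsogenousQuotient A₀) : X.hom.ker ≤ AddCommGroup.torsion A₀ := by
  have := X.finiteKernel
  intro a ha
  exact X.hom.ker.subtype.isOfFinAddOrder (isOfFinAddOrder_of_finite ⟨a, ha⟩)

end IsogenousQuotient

section Lambda

open AdelicTate IsogenousQuotient

variable {A₀ : Type} [AddCommGroup A₀]

lemma lambdaObj_eq_comap_ker (X : IsogenousQuotient A₀) :
    LambdaObj A₀ X = X.hom.ker.comap (eval A₀) :=
  comap_rTensor_adelicMap_range_tmulQ X.hom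

lemma range_tmulQ_le_lambdaObj (X : IsogenousQuotient A₀) :
    (tmulQ (M := AdelicTate A₀) 1).range ≤ LambdaObj A₀ X := by
  rw [← ker_eval, lambdaObj_eq_comap_ker]
  exact AddMonoidHom.ker_le_comap _ _

lemma finite_lambdaObj_quotient (X : IsogenousQuotient A₀) :
    Finite (LambdaObj A₀ X ⧸
      (tmulQ (M := AdelicTate A₀) 1).range.addSubgroupOf (LambdaObj A₀ X)) := by
  have := X.finiteKernel
  rw [← ker_eval, finite_quotient_ker_addSubgroupOf_iff, lambdaObj_eq_comap_ker]
  exact Finite.Set.subset (X.hom.ker : Set A₀) (AddSubgroup.map_comap_le _ _)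

lemma lambdaObj_mono {X Y : IsogenousQuotient A₀} (f : X ⟶ Y) :
    LambdaObj A₀ X ≤ LambdaObj A₀ Y := by
  rw [lambdaObj_eq_comap_ker, lambdaObj_eq_comap_ker]
  exact AddSubgroup.comap_mono (nonempty_hom_iff.1 ⟨f⟩)

/-- The functor `Λ` sending `φ : A₀ → B` to the lattice `(V̂φ)⁻¹(T̂B)`. -/
noncomputable def lambdaFunctor (A₀ : Type) [AddCommGroup A₀] :
    IsogenousQuotient A₀ ⥤ AdelicLattice A₀ where
  obj X := ⟨LambdaObj A₀ X, range_tmulQ_le_lambdaObj X, finite_lambdaObj_quotient X⟩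
  map f := homOfLE (lambdaObj_mono f)

instance lambdaFunctor_faithful : (lambdaFunctor A₀).Faithful where
  map_injective _ := Subsingleton.elim _ _

lemma lambdaFunctor_full (htors : AddCommGroup.torsion A₀ ≤ (eval A₀).range) :
    (lambdaFunctor A₀).Full where
  map_surjective {X Y} h := by
    have comap_le : X.hom.ker.comap (eval A₀) ≤ Y.hom.ker.comap (eval A₀) := by
      rw [← lambdaObj_eq_comap_ker, ← lambdaObj_eq_comap_ker]
      exact leOfHom h
    have ker_le : X.hom.ker ≤ Y.hom.ker :=
      (AddSubgroup.comap_le_comap_of_le_range (X.ker_hom_le_torsion.trans htors)).1 comap_le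
    exact (nonempty_hom_iff.2 ker_le).elim fun f => ⟨f, Subsingleton.elim _ _⟩

instance lambdaFunctor_essSurj : (lambdaFunctor A₀).EssSurj where
  mem_essImage L := by
    obtain ⟨L, range_le, finite_quotient⟩ := L
    rw [← ker_eval] at range_le
    have : Finite (L.map (eval A₀)) := by
      rwa [← ker_eval, finite_quotient_ker_addSubgroupOf_iff] at finite_quotient
    have lambdaObj_eq : LambdaObj A₀ (ofFiniteSubgroup (L.map (eval A₀))) = L := by
      rw [lambdaObj_eq_comap_ker, ker_ofFiniteSubgroup_hom, AddSubgroup.comap_map_eq_self range_le]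
    exact ⟨_, ⟨eqToIso (Subtype.ext lambdaObj_eq)⟩⟩

end Lambda

theorem lambda_functor_equivalence_general (A₀ : Type) [AddCommGroup A₀]
    (hdiv : ∀ a : A₀, IsOfFinAddOrder a → ∀ n : ℕ, 0 < n → ∃ b : A₀, n • b = a) :
    (∀ X : IsogenousQuotient A₀,
      Function.Bijective
        (LinearMap.rTensor (R := ℤ) ℚ (adelicMap X.hom).toIntLinearMap) ∧
      (tmulQ (M := AdelicTate A₀) 1).range ≤ LambdaObj A₀ X ∧
      Finite ((LambdaObj A₀ X) ⧸
        ((tmulQ (M := AdelicTate A₀) 1).range.addSubgroupOf (LambdaObj A₀ X)))) ∧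
    ∃ F : IsogenousQuotient A₀ ⥤ AdelicLattice A₀,
      (∀ X : IsogenousQuotient A₀, (F.obj X).1 = LambdaObj A₀ X) ∧ F.IsEquivalence := by
  have full : (lambdaFunctor A₀).Full :=
    lambdaFunctor_full (AdelicTate.torsion_le_range_eval hdiv)
  refine ⟨fun X => ?_, lambdaFunctor A₀, fun X => rfl, {}⟩
  have := X.finiteKernel
  exact ⟨AdelicTate.rTensor_adelicMap_bijective X.surjective, range_tmulQ_le_lambdaObj X,
    finite_lambdaObj_quotient X⟩

/-- Let `A₀` be a divisible abelian group with finite `n`-torsion for all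
`n ≥ 1`. Then: (i) for every surjection `φ : A₀ → B` with finite kernel the induced map
`V̂φ : V̂A₀ → V̂B` is an isomorphism and `Λφ := (V̂φ)⁻¹(T̂B)` contains `T̂A₀` with finite
quotient; (ii) `(B, φ) ↦ Λφ` is a functor from the category of such surjections to the
category of lattices in `V̂A₀` (with inclusions as morphisms); (iii) this functor is an
equivalence of categories. -/
theorem lambda_functor_equivalence (A₀ : Type) [AddCommGroup A₀]
    (hdiv : ∀ (a : A₀) (n : ℕ), 0 < n → ∃ b : A₀, n • b = a)
    (hfin : ∀ n : ℕ, 0 < n → Finite (torsionSub n A₀)) :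
    (∀ X : IsogenousQuotient A₀,
      Function.Bijective
        (LinearMap.rTensor (R := ℤ) ℚ (adelicMap X.hom).toIntLinearMap) ∧
      (tmulQ (M := AdelicTate A₀) 1).range ≤ LambdaObj A₀ X ∧
      Finite ((LambdaObj A₀ X) ⧸
        ((tmulQ (M := AdelicTate A₀) 1).range.addSubgroupOf (LambdaObj A₀ X)))) ∧
    ∃ F : IsogenousQuotient A₀ ⥤ AdelicLattice A₀,
      (∀ X : IsogenousQuotient A₀, (F.obj X).1 = LambdaObj A₀ X) ∧ F.IsEquivalence := by
  exact lambda_functor_equivalence_general A₀ fun a _ => hdiv a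
end
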